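/- arXiv:1912.00135 — 3 statements merged into one kernel-verified Lean document; each statement's English description precedes it below -/
import Mathlib

section
/- Let N ≥ 1 be an integer, q ∈ (1, ∞), and r ∈ (N, ∞) with q ≤ r. Then there exists a constant C = C(N, q, r) > 0 such that for every ε > 0, every measurable function a : ℝ^N → ℂ with ∫_{ℝ^N_+} |a|^r dx < ∞, and every continuously differentiable function b : ℝ^N → ℂ such that ∫_{ℝ^N_+} |b|^q dx < ∞ and ∫_{ℝ^N_+} ‖∇b‖^q dx < ∞, one has ‖a b‖_{L^q(ℝ^N_+)} ≤ ε ‖∇b‖_{L^q(ℝ^N_+)} + C ε^{−N/(r−N)} ‖a‖_{L^r(ℝ^N_+)}^{r/(r−N)} ‖b‖_{L^q(ℝ^N_+)}. -/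
open Real MeasureTheory

/-- The `L^p` norm (real exponent `p`) of `f` with respect to the measure `μ`. -/
noncomputable def LqNorm {α : Type*} [MeasurableSpace α] {E : Type*} [NormedAddCommGroup E]
    (μ : Measure α) (p : ℝ) (f : α → E) : ℝ :=
  (∫ x, ‖f x‖ ^ p ∂μ) ^ (1 / p)

/-- The open upper half-space `ℝ^N_+ = {x : x_N > 0}`. -/
def upperHalf (N : ℕ) (hN : 1 ≤ N) : Set (EuclideanSpace ℝ (Fin N)) :=
  {x | 0 < x ⟨N - 1, by omega⟩}

/-!
For `z` in the recession cone of `Ω` and `h > 0`, the fundamental theorem of calculus on the segment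
from `x` to `x + h z` bounds `|b(x)|` by `|b(x + h z)|` plus the integral of `h |z| |∇b(x + s h z)|`
over `0 < s ≤ 1`. Multiply by `|a(x)|` and take `L^q` norms in `(x, z)`, where `z` is distributed
according to a probability measure `ν ≤ κ μ` on the cone. The substitution `y = x + t z` gives
`∬ |a(x)|^q |f(x + t z)|^q dν(z) dx = ∫ |f(y)|^q ∫ |a(y - t z)|^q dν(z) dy`, and since `q ≤ r` the
inner integral is at most `(κ^{1/r} t^{-n/r} ‖a‖_r)^q`, with `n` the dimension. Using this with
`t = h` and `t = s h`, where `n < r` makes `s^{-n/r}` integrable on `(0, 1]`, one gets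
`‖ab‖_q ≤ k h^{-n/r} ‖a‖_r (‖b‖_q + m h ‖∇b‖_q)` for every `h > 0`. It remains to choose `h` so that
the coefficient of `‖∇b‖_q` is `ε`.
-/

open Module (finrank)
open scoped ENNReal

section Minkowski

variable {α β : Type*} [MeasurableSpace α] [MeasurableSpace β] {q : ℝ}

theorem rpow_lintegral_mul_le (ν : Measure β) (hq : 1 ≤ q) {w g : β → ℝ≥0∞}
    (hw : AEMeasurable w ν) (hg : AEMeasurable g ν) :
    (∫⁻ y, w y * g y ∂ν) ^ q ≤ (∫⁻ y, w y ∂ν) ^ (q - 1) * ∫⁻ y, w y * g y ^ q ∂ν := by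
  have hq0 : 0 < q := by linarith
  have hq1 : 0 ≤ 1 - 1 / q := sub_nonneg.2 ((div_le_one hq0).2 hq)
  have holder := ENNReal.lintegral_mul_norm_pow_le (μ := ν) (f := fun y ↦ w y * g y ^ q) (g := w)
    (hw.mul (hg.pow_const q)) hw (p := 1 / q) (by positivity) hq1 (by ring)
  have split (y : β) : (w y * g y ^ q) ^ (1 / q) * w y ^ (1 - 1 / q) = w y * g y := by
    rw [ENNReal.mul_rpow_of_nonneg _ _ (by positivity), ← ENNReal.rpow_mul,
      mul_one_div_cancel hq0.ne', ENNReal.rpow_one, mul_right_comm,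
      ← ENNReal.rpow_add_of_nonneg _ _ (by positivity) hq1, add_sub_cancel, ENNReal.rpow_one]
  simp_rw [split] at holder
  refine (ENNReal.rpow_le_rpow holder hq0.le).trans_eq ?_
  rw [ENNReal.mul_rpow_of_nonneg _ _ hq0.le, ← ENNReal.rpow_mul, ← ENNReal.rpow_mul,
    one_div_mul_cancel hq0.ne', ENNReal.rpow_one, sub_mul, one_div_mul_cancel hq0.ne', one_mul,
    mul_comm]

variable {μ : Measure α} {ν : Measure β}

theorem eLpNorm'_rpow_eq_lintegral (hq : 0 < q) (f : α → ℝ≥0∞) :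
    eLpNorm' f q μ ^ q = ∫⁻ x, f x ^ q ∂μ :=
  (lintegral_rpow_enorm_eq_rpow_eLpNorm' hq).symm

variable [SFinite μ] {f : α → β → ℝ≥0∞}

theorem measurable_eLpNorm'_prod_left (hf : Measurable (Function.uncurry f)) :
    Measurable fun y ↦ eLpNorm' (f · y) q μ :=
  ((hf.comp measurable_swap).enorm.pow_const q).lintegral_prod_right.pow_const (1 / q)

variable [SFinite ν]

theorem ae_ae_eLpNorm'_mul_div_eq (hq : 0 < q) (hf : Measurable (Function.uncurry f))
    (hfin : ∫⁻ y, eLpNorm' (f · y) q μ ∂ν ≠ ∞) :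
    ∀ᵐ x ∂μ, ∀ᵐ y ∂ν, eLpNorm' (f · y) q μ * (f x y / eLpNorm' (f · y) q μ) = f x y := by
  have hw := measurable_eLpNorm'_prod_left (μ := μ) (q := q) hf
  have hwp : Measurable fun p : α × β ↦ eLpNorm' (f · p.2) q μ := hw.comp measurable_snd
  have hmeas : MeasurableSet {p : α × β | eLpNorm' (f · p.2) q μ *
      (f p.1 p.2 / eLpNorm' (f · p.2) q μ) = f p.1 p.2} :=
    measurableSet_eq_fun (hwp.mul (hf.div hwp)) hf
  refine (Measure.ae_ae_comm hmeas).2 ?_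
  filter_upwards [ae_lt_top hw hfin] with y hy
  rcases eq_or_ne (eLpNorm' (f · y) q μ) 0 with h0 | h0
  · have hfy : Measurable (f · y) := hf.comp (measurable_id.prodMk measurable_const)
    filter_upwards [(eLpNorm'_eq_zero_iff hq hfy.aestronglyMeasurable).1 h0] with x hx
    simp_all
  · exact .of_forall fun x ↦ ENNReal.mul_div_cancel h0 hy.ne

theorem eLpNorm'_lintegral_le (hq : 1 ≤ q) (hf : Measurable (Function.uncurry f)) :
    eLpNorm' (fun x ↦ ∫⁻ y, f x y ∂ν) q μ ≤ ∫⁻ y, eLpNorm' (f · y) q μ ∂ν := by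
  have hq0 : 0 < q := by linarith
  set w : β → ℝ≥0∞ := fun y ↦ eLpNorm' (f · y) q μ
  rcases eq_or_ne (∫⁻ y, w y ∂ν) ∞ with htop | hfin
  · simp [htop]
  have hw : Measurable w := measurable_eLpNorm'_prod_left hf
  have hfx (x : α) : Measurable (f x) := hf.comp (measurable_const.prodMk measurable_id)
  have hfy (y : β) : Measurable (f · y) := hf.comp (measurable_id.prodMk measurable_const)
  have hjoint : Measurable (Function.uncurry fun x y ↦ w y * (f x y / w y) ^ q) :=
    (hw.comp measurable_snd).mul ((hf.div (hw.comp measurable_snd)).pow_const q)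
  -- Jensen for the weight `w` and the normalized slices `f x y / w y`.
  have jensen : ∀ᵐ x ∂μ, (∫⁻ y, f x y ∂ν) ^ q ≤
      (∫⁻ y, w y ∂ν) ^ (q - 1) * ∫⁻ y, w y * (f x y / w y) ^ q ∂ν := by
    filter_upwards [ae_ae_eLpNorm'_mul_div_eq hq0 hf hfin] with x hx
    rw [← lintegral_congr_ae hx]
    exact rpow_lintegral_mul_le ν hq hw.aemeasurable ((hfx x).div hw).aemeasurable
  have normalized (y : β) : ∫⁻ x, w y * (f x y / w y) ^ q ∂μ ≤ w y := by
    simp_rw [ENNReal.div_rpow_of_nonneg _ _ hq0.le, div_eq_mul_inv]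
    rw [lintegral_const_mul _ (by have := hfy y; fun_prop),
      lintegral_mul_const _ ((hfy y).pow_const q), ← eLpNorm'_rpow_eq_lintegral hq0]
    exact mul_le_of_le_one_right' (ENNReal.mul_inv_le_one _)
  rw [← ENNReal.rpow_le_rpow_iff hq0, eLpNorm'_rpow_eq_lintegral hq0]
  calc ∫⁻ x, (∫⁻ y, f x y ∂ν) ^ q ∂μ
      ≤ ∫⁻ x, (∫⁻ y, w y ∂ν) ^ (q - 1) * ∫⁻ y, w y * (f x y / w y) ^ q ∂ν ∂μ :=
        lintegral_mono_ae jensen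
    _ = (∫⁻ y, w y ∂ν) ^ (q - 1) * ∫⁻ y, ∫⁻ x, w y * (f x y / w y) ^ q ∂μ ∂ν := by
        rw [lintegral_const_mul _ hjoint.lintegral_prod_right,
          lintegral_lintegral_swap hjoint.aemeasurable]
    _ ≤ (∫⁻ y, w y ∂ν) ^ (q - 1) * (∫⁻ y, w y ∂ν) ^ (1 : ℝ) := by
        rw [ENNReal.rpow_one]
        gcongr with y
        exact normalized y
    _ = (∫⁻ y, w y ∂ν) ^ q := by
        rw [← ENNReal.rpow_add_of_nonneg _ _ (by linarith) zero_le_one, sub_add_cancel]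

end Minkowski

section Averaging

variable {E : Type*} [NormedAddCommGroup E] [NormedSpace ℝ E] [FiniteDimensional ℝ E]
  [MeasurableSpace E] [BorelSpace E] {μ : Measure E} [μ.IsAddHaarMeasure]
  {q r t h : ℝ} {κ : ℝ≥0∞} {ν : Measure E} [IsProbabilityMeasure ν]

theorem lintegral_comp_sub_smul (ht : 0 < t) {f : E → ℝ≥0∞} (hf : Measurable f) (y : E) :
    ∫⁻ z, f (y - t • z) ∂μ = ENNReal.ofReal t ^ (-(finrank ℝ E : ℝ)) * ∫⁻ x, f x ∂μ := by
  have jacobian :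
      ENNReal.ofReal |(t ^ finrank ℝ E)⁻¹| = ENNReal.ofReal t ^ (-(finrank ℝ E : ℝ)) := by
    rw [abs_of_pos (by positivity), ENNReal.rpow_neg, ENNReal.rpow_natCast,
      ENNReal.ofReal_inv_of_pos (by positivity), ENNReal.ofReal_pow ht.le]
  have hsmul : Measurable (t • · : E → E) := by fun_prop
  rw [← lintegral_map (f := fun z ↦ f (y - z)) (by fun_prop) hsmul,
    Measure.map_addHaar_smul _ ht.ne', lintegral_smul_measure, smul_eq_mul, jacobian,
    lintegral_sub_left_eq_self f y]

theorem eLpNorm'_comp_sub_smul_le (hν : ν ≤ κ • μ) (hq : 0 < q) (hqr : q ≤ r) (ht : 0 < t)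
    {A : E → ℝ≥0∞} (hA : Measurable A) (y : E) :
    eLpNorm' (fun z ↦ A (y - t • z)) q ν ≤
      κ ^ (1 / r) * ENNReal.ofReal t ^ (-(finrank ℝ E / r)) * eLpNorm' A r μ := by
  have hr : 0 < r := hq.trans_le hqr
  calc eLpNorm' (fun z ↦ A (y - t • z)) q ν
      ≤ eLpNorm' (fun z ↦ A (y - t • z)) r ν :=
        eLpNorm'_le_eLpNorm'_of_exponent_le hq hqr ν
          (hA.comp (by fun_prop : Measurable fun z ↦ y - t • z)).aestronglyMeasurable
    _ ≤ eLpNorm' (fun z ↦ A (y - t • z)) r (κ • μ) := eLpNorm'_mono_measure _ hν hr.le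
    _ = κ ^ (1 / r) * (∫⁻ z, A (y - t • z) ^ r ∂μ) ^ (1 / r) := by
        simp only [eLpNorm'_smul_measure hr.le, eLpNorm'_eq_lintegral_enorm, enorm_eq_self]
    _ = κ ^ (1 / r) * ENNReal.ofReal t ^ (-(finrank ℝ E / r)) * eLpNorm' A r μ := by
        rw [lintegral_comp_sub_smul ht (hA.pow_const r),
          ENNReal.mul_rpow_of_nonneg _ _ (by positivity), ← ENNReal.rpow_mul, mul_assoc]
        simp only [eLpNorm'_eq_lintegral_enorm, enorm_eq_self, mul_one_div, neg_div]

theorem eLpNorm'_prod_mul_comp_add_smul_le (hν : ν ≤ κ • μ) (hq : 0 < q) (hqr : q ≤ r)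
    (ht : 0 < t) {A F : E → ℝ≥0∞} (hA : Measurable A) (hF : Measurable F) :
    eLpNorm' (fun p : E × E ↦ A p.1 * F (p.1 + t • p.2)) q (μ.prod ν) ≤
      κ ^ (1 / r) * ENNReal.ofReal t ^ (-(finrank ℝ E / r)) * eLpNorm' A r μ * eLpNorm' F q μ := by
  set K := κ ^ (1 / r) * ENNReal.ofReal t ^ (-(finrank ℝ E / r)) * eLpNorm' A r μ
  rw [← ENNReal.rpow_le_rpow_iff hq, eLpNorm'_rpow_eq_lintegral hq]
  calc ∫⁻ p : E × E, (A p.1 * F (p.1 + t • p.2)) ^ q ∂μ.prod ν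
      = ∫⁻ z, ∫⁻ x, (A x * F (x + t • z)) ^ q ∂μ ∂ν :=
        lintegral_prod_symm' _ (by fun_prop)
    _ = ∫⁻ z, ∫⁻ y, F y ^ q * A (y - t • z) ^ q ∂μ ∂ν := by
        refine lintegral_congr fun z ↦ ?_
        rw [← lintegral_add_right_eq_self (fun y ↦ F y ^ q * A (y - t • z) ^ q) (t • z)]
        simp only [add_sub_cancel_right, ENNReal.mul_rpow_of_nonneg _ _ hq.le, mul_comm]
    _ = ∫⁻ y, F y ^ q * ∫⁻ z, A (y - t • z) ^ q ∂ν ∂μ := by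
        rw [lintegral_lintegral_swap
          (Measurable.aemeasurable (by unfold Function.uncurry; fun_prop))]
        exact lintegral_congr fun y ↦ lintegral_const_mul _ (by fun_prop)
    _ ≤ ∫⁻ y, F y ^ q * K ^ q ∂μ := by
        gcongr with y
        rw [← eLpNorm'_rpow_eq_lintegral hq]
        gcongr
        exact eLpNorm'_comp_sub_smul_le hν hq hqr ht hA y
    _ = (K * eLpNorm' F q μ) ^ q := by
        rw [lintegral_mul_const _ (hF.pow_const q), ← eLpNorm'_rpow_eq_lintegral hq,
          ← ENNReal.mul_rpow_of_nonneg _ _ hq.le, mul_comm]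

theorem eLpNorm'_prod_lintegral_mul_comp_add_smul_le (hν : ν ≤ κ • μ) (hq : 1 ≤ q) (hqr : q ≤ r)
    (hh : 0 < h) {A G : E → ℝ≥0∞} (hA : Measurable A) (hG : Measurable G) :
    eLpNorm' (fun p : E × E ↦ ∫⁻ s in Set.Ioc (0 : ℝ) 1, A p.1 * G (p.1 + (s * h) • p.2)) q
        (μ.prod ν) ≤
      κ ^ (1 / r) * ENNReal.ofReal h ^ (-(finrank ℝ E / r)) * eLpNorm' A r μ *
        ((∫⁻ s in Set.Ioc (0 : ℝ) 1, ENNReal.ofReal s ^ (-(finrank ℝ E / r))) *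
          eLpNorm' G q μ) := by
  set θ : ℝ := finrank ℝ E / r
  have scale {s : ℝ} (hs : 0 < s) :
      ENNReal.ofReal (s * h) ^ (-θ) = ENNReal.ofReal s ^ (-θ) * ENNReal.ofReal h ^ (-θ) := by
    rw [ENNReal.ofReal_mul hs.le,
      ENNReal.mul_rpow_of_ne_top ENNReal.ofReal_ne_top ENNReal.ofReal_ne_top]
  calc eLpNorm' (fun p : E × E ↦ ∫⁻ s in Set.Ioc (0 : ℝ) 1, A p.1 * G (p.1 + (s * h) • p.2)) q
          (μ.prod ν)
      ≤ ∫⁻ s in Set.Ioc (0 : ℝ) 1,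
          eLpNorm' (fun p : E × E ↦ A p.1 * G (p.1 + (s * h) • p.2)) q (μ.prod ν) :=
        eLpNorm'_lintegral_le hq (by unfold Function.uncurry; fun_prop)
    _ ≤ ∫⁻ s in Set.Ioc (0 : ℝ) 1, ENNReal.ofReal s ^ (-θ) *
          (κ ^ (1 / r) * ENNReal.ofReal h ^ (-θ) * eLpNorm' A r μ * eLpNorm' G q μ) := by
        refine setLIntegral_mono' measurableSet_Ioc fun s hs ↦ ?_
        refine (eLpNorm'_prod_mul_comp_add_smul_le hν (by linarith) hqr (mul_pos hs.1 hh) hA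
          hG).trans_eq ?_
        rw [scale hs.1]
        ring
    _ = _ := by
        rw [lintegral_mul_const _ (by fun_prop)]
        ring

theorem eLpNorm'_mul_le_of_ae_le_translates (hν : ν ≤ κ • μ) (hq : 1 ≤ q) (hqr : q ≤ r)
    (hh : 0 < h) {A u F G : E → ℝ≥0∞} (hA : Measurable A) (hu : Measurable u) (hF : Measurable F)
    (hG : Measurable G) {c : ℝ≥0∞}
    (hle : ∀ᵐ p ∂μ.prod ν, A p.1 * u p.1 ≤ A p.1 * F (p.1 + h • p.2) +
      c * ∫⁻ s in Set.Ioc (0 : ℝ) 1, A p.1 * G (p.1 + (s * h) • p.2)) :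
    eLpNorm' (fun x ↦ A x * u x) q μ ≤
      κ ^ (1 / r) * ENNReal.ofReal h ^ (-(finrank ℝ E / r)) * eLpNorm' A r μ *
        (eLpNorm' F q μ + c * ((∫⁻ s in Set.Ioc (0 : ℝ) 1,
          ENNReal.ofReal s ^ (-(finrank ℝ E / r))) * eLpNorm' G q μ)) := by
  have hq0 : 0 < q := by linarith
  set main : E × E → ℝ≥0∞ := fun p ↦ A p.1 * F (p.1 + h • p.2)
  set error : E × E → ℝ≥0∞ := fun p ↦ ∫⁻ s in Set.Ioc (0 : ℝ) 1, A p.1 * G (p.1 + (s * h) • p.2)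
  have hmain : Measurable main := by fun_prop
  have herror : Measurable error := by
    have : Measurable fun z : (E × E) × ℝ ↦ A z.1.1 * G (z.1.1 + (z.2 * h) • z.1.2) := by fun_prop
    exact this.lintegral_prod_right'
  calc eLpNorm' (fun x ↦ A x * u x) q μ
      = eLpNorm' (fun p : E × E ↦ A p.1 * u p.1) q (μ.prod ν) := by
        simp only [eLpNorm'_eq_lintegral_enorm, enorm_eq_self]
        rw [measurePreserving_fst.lintegral_comp (f := fun x ↦ (A x * u x) ^ q) (by fun_prop)]
    _ ≤ eLpNorm' (main + (fun p ↦ c * error p)) q (μ.prod ν) := eLpNorm'_mono_enorm_ae hq0.le hle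
    _ ≤ eLpNorm' main q (μ.prod ν) + eLpNorm' (fun p ↦ c * error p) q (μ.prod ν) :=
        eLpNorm'_add_le hmain.aestronglyMeasurable (herror.const_mul c).aestronglyMeasurable hq
    _ ≤ eLpNorm' main q (μ.prod ν) + c * eLpNorm' error q (μ.prod ν) := by
        gcongr
        exact eLpNorm'_le_mul_eLpNorm'_of_ae_le_mul herror.aestronglyMeasurable
          (.of_forall fun _ ↦ le_rfl) hq0
    _ ≤ _ := by
        rw [mul_add, mul_left_comm]
        gcongr
        · exact eLpNorm'_prod_mul_comp_add_smul_le hν hq0 hqr hh hA hF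
        · exact eLpNorm'_prod_lintegral_mul_comp_add_smul_le hν hq hqr hh hA hG

end Averaging

theorem eLpNorm'_indicator_eq_eLpNorm'_restrict {α F : Type*} [MeasurableSpace α] {μ : Measure α}
    [TopologicalSpace F] [ESeminormedAddMonoid F] {Ω : Set α} (hΩ : MeasurableSet Ω) {q : ℝ}
    (hq : 0 < q) (f : α → F) :
    eLpNorm' (Ω.indicator f) q μ = eLpNorm' f q (μ.restrict Ω) := by
  simp only [eLpNorm'_eq_lintegral_enorm]
  rw [← lintegral_indicator hΩ]
  congr 2 with x
  by_cases hx : x ∈ Ω <;> simp [hx, hq]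

theorem measurable_indicator_enorm_of_continuousOn {X F : Type*} [TopologicalSpace X]
    [MeasurableSpace X] [OpensMeasurableSpace X] [TopologicalSpace F] [ContinuousENorm F]
    {Ω : Set X} (hΩ : MeasurableSet Ω) {f : X → F} (hf : ContinuousOn f Ω) :
    Measurable (Ω.indicator (‖f ·‖ₑ)) := by
  classical
  rw [← Set.piecewise_eq_indicator]
  exact hf.enorm.measurable_piecewise continuousOn_const hΩ

theorem lintegral_Ioc_ofReal_rpow_neg {β : ℝ} (hβ : β < 1) :
    ∫⁻ s in Set.Ioc (0 : ℝ) 1, ENNReal.ofReal s ^ (-β) = ENNReal.ofReal (1 / (1 - β)) := by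
  have hint := (intervalIntegral.intervalIntegrable_rpow' (a := 0) (b := 1) (r := -β)
    (by linarith)).1
  calc ∫⁻ s in Set.Ioc (0 : ℝ) 1, ENNReal.ofReal s ^ (-β)
      = ∫⁻ s in Set.Ioc (0 : ℝ) 1, ENNReal.ofReal (s ^ (-β)) :=
        setLIntegral_congr_fun measurableSet_Ioc fun s hs ↦ ENNReal.ofReal_rpow_of_pos hs.1
    _ = ENNReal.ofReal (∫ s in (0 : ℝ)..1, s ^ (-β)) := by
        rw [intervalIntegral.integral_of_le zero_le_one, ofReal_integral_eq_lintegral_ofReal hint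
          (ae_restrict_of_forall_mem measurableSet_Ioc fun s hs ↦ rpow_nonneg hs.1.le _)]
    _ = ENNReal.ofReal (1 / (1 - β)) := by
        rw [integral_rpow (Or.inl (by linarith)), one_rpow, zero_rpow (by linarith), sub_zero,
          neg_add_eq_sub]

theorem exists_isProbabilityMeasure_le_smul {E : Type*} [NormedAddCommGroup E]
    [ProperSpace E] [MeasurableSpace E] [BorelSpace E] (μ : Measure E) [μ.IsOpenPosMeasure]
    [IsFiniteMeasureOnCompacts μ] {D : Set E} (hD : (interior D).Nonempty) :
    ∃ (ν : Measure E) (κ R : ℝ), IsProbabilityMeasure ν ∧ 0 < κ ∧ 0 < R ∧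
      ν ≤ ENNReal.ofReal κ • μ ∧ ∀ᵐ z ∂ν, z ∈ D ∧ ‖z‖ ≤ R := by
  obtain ⟨z₀, hz₀⟩ := hD
  obtain ⟨δ, hδ, hball⟩ := Metric.isOpen_iff.1 isOpen_interior z₀ hz₀
  have hpos : μ (Metric.ball z₀ δ) ≠ 0 := (Metric.measure_ball_pos μ z₀ hδ).ne'
  have hfin : μ (Metric.ball z₀ δ) ≠ ∞ := measure_ball_lt_top.ne
  refine ⟨ProbabilityTheory.cond μ (Metric.ball z₀ δ), (μ (Metric.ball z₀ δ))⁻¹.toReal, ‖z₀‖ + δ,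
    ProbabilityTheory.cond_isProbabilityMeasure_of_finite hpos hfin,
    ENNReal.toReal_pos (ENNReal.inv_ne_zero.2 hfin) (ENNReal.inv_ne_top.2 hpos), by positivity,
    ?_, ?_⟩
  · rw [ENNReal.ofReal_toReal (ENNReal.inv_ne_top.2 hpos)]
    exact smul_mono_right _ Measure.restrict_le_self
  · filter_upwards [ProbabilityTheory.ae_cond_mem measurableSet_ball] with z hz
    exact ⟨interior_subset (hball hz), (norm_lt_of_mem_ball hz).le⟩

/-- The recession cone of a set `Ω`: the directions `v` in which one can travel indefinitely from
any point of `Ω` without leaving `Ω`. That it has nonempty interior is an infinite cone condition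
on `Ω`. -/
def recessionCone {E : Type*} [AddCommGroup E] [Module ℝ E] (Ω : Set E) : Set E :=
  {v | ∀ x ∈ Ω, ∀ t : ℝ, 0 < t → x + t • v ∈ Ω}

section ConeCondition

variable {E F : Type*} [NormedAddCommGroup E] [NormedSpace ℝ E]
  [NormedAddCommGroup F] [NormedSpace ℝ F] {Ω : Set E} {b : E → F}

theorem enorm_le_enorm_add_lintegral_enorm_fderiv (hΩ : IsOpen Ω)
    (hb : ContDiffOn ℝ 1 b Ω) {x v : E} (hseg : ∀ s ∈ Set.Icc (0 : ℝ) 1, x + s • v ∈ Ω) :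
    ‖b x‖ₑ ≤ ‖b (x + v)‖ₑ + ‖v‖ₑ * ∫⁻ s in Set.Ioc (0 : ℝ) 1, ‖fderiv ℝ b (x + s • v)‖ₑ := by
  have hline : ContDiff ℝ 1 fun s : ℝ ↦ x + s • v := by fun_prop
  have hderiv (s : ℝ) (hs : s ∈ Set.Icc (0 : ℝ) 1) :
      deriv (fun s : ℝ ↦ b (x + s • v)) s = fderiv ℝ b (x + s • v) v := by
    have hb' : DifferentiableAt ℝ b (x + s • v) :=
      (hb.contDiffAt (hΩ.mem_nhds (hseg s hs))).differentiableAt one_ne_zero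
    have hline' : HasDerivAt (fun s : ℝ ↦ x + s • v) v s := by
      simpa using ((hasDerivAt_id s).smul_const v).const_add x
    exact (hb'.hasFDerivAt.comp_hasDerivAt s hline').deriv
  have ftc : ‖b (x + v) - b x‖ₑ ≤
      ‖v‖ₑ * ∫⁻ s in Set.Ioc (0 : ℝ) 1, ‖fderiv ℝ b (x + s • v)‖ₑ := calc
    ‖b (x + v) - b x‖ₑ
      ≤ ∫⁻ s in Set.Icc (0 : ℝ) 1, ‖deriv (fun s : ℝ ↦ b (x + s • v)) s‖ₑ := by
        simpa [Function.comp_def] using enorm_sub_le_lintegral_deriv_of_contDiffOn_Icc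
          (hb.comp hline.contDiffOn hseg) zero_le_one
    _ ≤ ∫⁻ s in Set.Icc (0 : ℝ) 1, ‖v‖ₑ * ‖fderiv ℝ b (x + s • v)‖ₑ := by
        refine setLIntegral_mono' measurableSet_Icc fun s hs ↦ ?_
        rw [hderiv s hs, mul_comm]
        exact ContinuousLinearMap.le_opENorm _ _
    _ = ‖v‖ₑ * ∫⁻ s in Set.Ioc (0 : ℝ) 1, ‖fderiv ℝ b (x + s • v)‖ₑ := by
        rw [lintegral_const_mul' _ _ enorm_ne_top, restrict_Ioc_eq_restrict_Icc]
  calc ‖b x‖ₑ = ‖b (x + v) - (b (x + v) - b x)‖ₑ := by rw [sub_sub_cancel]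
    _ ≤ ‖b (x + v)‖ₑ + ‖b (x + v) - b x‖ₑ := enorm_sub_le
    _ ≤ _ := by gcongr

theorem enorm_le_enorm_add_lintegral_of_mem_recessionCone (hΩ : IsOpen Ω) (hb : ContDiffOn ℝ 1 b Ω)
    {x z : E} (hx : x ∈ Ω) (hz : z ∈ recessionCone Ω) {h : ℝ} (hh : 0 < h) :
    ‖b x‖ₑ ≤ ‖b (x + h • z)‖ₑ +
      ‖h • z‖ₑ * ∫⁻ s in Set.Ioc (0 : ℝ) 1, ‖fderiv ℝ b (x + (s * h) • z)‖ₑ := by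
  simp only [← smul_smul]
  refine enorm_le_enorm_add_lintegral_enorm_fderiv hΩ hb fun s hs ↦ ?_
  rcases hs.1.eq_or_lt with rfl | hs0
  · simpa using hx
  · simpa only [smul_smul] using hz x hx (s * h) (mul_pos hs0 hh)

theorem indicator_mul_enorm_le_translates (hΩ : IsOpen Ω) (hb : ContDiffOn ℝ 1 b Ω)
    (A : E → ℝ≥0∞) (x : E) {z : E} (hz : z ∈ recessionCone Ω) {h R : ℝ} (hh : 0 < h)
    (hzR : ‖z‖ ≤ R) :
    Ω.indicator A x * Ω.indicator (‖b ·‖ₑ) x ≤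
      Ω.indicator A x * Ω.indicator (‖b ·‖ₑ) (x + h • z) +
        ENNReal.ofReal (h * R) * ∫⁻ s in Set.Ioc (0 : ℝ) 1,
          Ω.indicator A x * Ω.indicator (‖fderiv ℝ b ·‖ₑ) (x + (s * h) • z) := by
  by_cases hx : x ∈ Ω
  swap
  · simp [hx]
  have hgrad : A x * ∫⁻ s in Set.Ioc (0 : ℝ) 1, ‖fderiv ℝ b (x + (s * h) • z)‖ₑ ≤
      ∫⁻ s in Set.Ioc (0 : ℝ) 1,
        Ω.indicator A x * Ω.indicator (‖fderiv ℝ b ·‖ₑ) (x + (s * h) • z) := by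
    refine (lintegral_const_mul_le _ _).trans_eq ?_
    refine setLIntegral_congr_fun measurableSet_Ioc fun s hs ↦ ?_
    simp only [Set.indicator_of_mem hx, Set.indicator_of_mem (hz x hx _ (mul_pos hs.1 hh))]
  have hnorm : ‖h • z‖ₑ ≤ ENNReal.ofReal (h * R) := by
    rw [← ofReal_norm, norm_smul, norm_of_nonneg hh.le]
    gcongr
  calc Ω.indicator A x * Ω.indicator (‖b ·‖ₑ) x
      = A x * ‖b x‖ₑ := by rw [Set.indicator_of_mem hx, Set.indicator_of_mem hx]
    _ ≤ A x * (‖b (x + h • z)‖ₑ + ENNReal.ofReal (h * R) *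
          ∫⁻ s in Set.Ioc (0 : ℝ) 1, ‖fderiv ℝ b (x + (s * h) • z)‖ₑ) := by
        gcongr
        exact (enorm_le_enorm_add_lintegral_of_mem_recessionCone hΩ hb hx hz hh).trans (by gcongr)
    _ ≤ _ := by
        rw [mul_add, mul_left_comm, Set.indicator_of_mem hx A,
          Set.indicator_of_mem (hz x hx h hh)]
        gcongr
        simpa only [Set.indicator_of_mem hx] using hgrad

variable [FiniteDimensional ℝ E] [MeasurableSpace E] [BorelSpace E] {μ : Measure E}
  [μ.IsAddHaarMeasure]

theorem eLpNorm'_mul_enorm_le_of_ae_mem_recessionCone {q r h R : ℝ} {κ : ℝ≥0∞} {ν : Measure E}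
    [IsProbabilityMeasure ν] (hν : ν ≤ κ • μ) (hνΩ : ∀ᵐ z ∂ν, z ∈ recessionCone Ω ∧ ‖z‖ ≤ R)
    (hΩ : IsOpen Ω) (hq : 1 ≤ q) (hqr : q ≤ r) (hr : finrank ℝ E < r) (hh : 0 < h)
    (hb : ContDiffOn ℝ 1 b Ω) {A : E → ℝ≥0∞} (hA : Measurable A) :
    eLpNorm' (fun x ↦ A x * ‖b x‖ₑ) q (μ.restrict Ω) ≤
      κ ^ (1 / r) * ENNReal.ofReal h ^ (-(finrank ℝ E / r)) * eLpNorm' A r (μ.restrict Ω) *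
        (eLpNorm' b q (μ.restrict Ω) +
          ENNReal.ofReal (h * R) * (ENNReal.ofReal (1 / (1 - finrank ℝ E / r)) *
            eLpNorm' (fderiv ℝ b) q (μ.restrict Ω))) := by
  have hq0 : 0 < q := by linarith
  have hθ : finrank ℝ E / r < 1 := (div_lt_one (by linarith)).2 hr
  have htranslates := (Measure.quasiMeasurePreserving_snd (μ := μ) (ν := ν)).ae hνΩ
  have key := eLpNorm'_mul_le_of_ae_le_translates (u := Ω.indicator (‖b ·‖ₑ)) hν hq hqr hh
    (hA.indicator hΩ.measurableSet)
    (measurable_indicator_enorm_of_continuousOn hΩ.measurableSet hb.continuousOn)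
    (measurable_indicator_enorm_of_continuousOn hΩ.measurableSet hb.continuousOn)
    (measurable_indicator_enorm_of_continuousOn hΩ.measurableSet
      (hb.continuousOn_fderiv_of_isOpen hΩ le_rfl))
    (htranslates.mono fun p hp ↦ indicator_mul_enorm_le_translates hΩ hb A p.1 hp.1 hh hp.2)
  simpa only [← Set.indicator_mul, eLpNorm'_indicator_eq_eLpNorm'_restrict hΩ.measurableSet hq0,
    eLpNorm'_indicator_eq_eLpNorm'_restrict hΩ.measurableSet (hq0.trans_le hqr), eLpNorm'_enorm,
    lintegral_Ioc_ofReal_rpow_neg hθ] using key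

end ConeCondition

theorem le_add_mul_rpow_of_forall_pos_le {θ α β ε u v w : ℝ} (hθ : θ < 1) (hβ : 0 < β) (hε : 0 < ε)
    (hu : ∀ h : ℝ, 0 < h → u ≤ α * h ^ (-θ) * v + β * h ^ (1 - θ) * w) :
    u ≤ ε * w + α * (β / ε) ^ (θ / (1 - θ)) * v := by
  have hθ' : 1 - θ ≠ 0 := by linarith
  have hy : 0 < ε / β := by positivity
  -- This value of `h` solves `β * h ^ (1 - θ) = ε`.
  convert hu ((ε / β) ^ (1 / (1 - θ))) (by positivity) using 1
  have hgrad : ((ε / β) ^ (1 / (1 - θ))) ^ (1 - θ) = ε / β := by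
    rw [← rpow_mul hy.le, one_div_mul_cancel hθ', rpow_one]
  have hzero : ((ε / β) ^ (1 / (1 - θ))) ^ (-θ) = (β / ε) ^ (θ / (1 - θ)) := by
    rw [← rpow_mul hy.le, ← inv_div β ε, inv_rpow (by positivity), ← rpow_neg (by positivity)]
    congr 1
    ring
  rw [hgrad, hzero, mul_div_cancel₀ _ hβ.ne', add_comm]

theorem le_add_mul_rpow_of_forall_pos_le_mul_add {n r k m A B G ε u : ℝ} (hr : 0 < r) (hn : n < r)
    (hk : 0 < k) (hm : 0 < m) (hA : 0 ≤ A) (hG : 0 ≤ G) (hε : 0 < ε)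
    (hu : ∀ h : ℝ, 0 < h → u ≤ k * h ^ (-(n / r)) * A * (B + h * m * G)) :
    u ≤ ε * G + k * (k * m) ^ (n / (r - n)) * ε ^ (-n / (r - n)) * A ^ (r / (r - n)) * B := by
  have hrn : 0 < r - n := sub_pos.2 hn
  rcases hA.eq_or_lt with rfl | hA
  · have hu0 : u ≤ 0 := by simpa only [mul_zero, zero_mul] using hu 1 one_pos
    rw [zero_rpow (div_pos hr hrn).ne', mul_zero, zero_mul, add_zero]
    exact hu0.trans (by positivity)
  have hexpand (h : ℝ) (hh : 0 < h) : k * h ^ (-(n / r)) * A * (B + h * m * G) =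
      k * A * h ^ (-(n / r)) * B + k * m * A * h ^ (1 - n / r) * G := by
    rw [sub_eq_neg_add, rpow_add_one hh.ne']
    ring
  have hε_exp : n / r / (1 - n / r) = n / (r - n) := by field_simp
  have hA_exp : r / (r - n) = 1 + n / (r - n) := by field_simp; ring
  calc u ≤ ε * G + k * A * (k * m * A / ε) ^ (n / r / (1 - n / r)) * B :=
        le_add_mul_rpow_of_forall_pos_le ((div_lt_one hr).2 hn) (by positivity) hε
          fun h hh ↦ (hu h hh).trans_eq (hexpand h hh)
    _ = _ := by
        rw [hε_exp, hA_exp, rpow_add hA, rpow_one, neg_div, rpow_neg hε.le,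
          div_rpow (by positivity) hε.le, mul_rpow (by positivity) hA.le]
        ring

section LqNorm

variable {α F : Type*} [MeasurableSpace α] {μ : Measure α} [NormedAddCommGroup F] {p : ℝ}
  {f : α → F}

theorem LqNorm_nonneg : 0 ≤ LqNorm μ p f :=
  rpow_nonneg (integral_nonneg fun _ ↦ rpow_nonneg (norm_nonneg _) _) _

theorem ofReal_LqNorm (hp : 0 < p) (hf : Integrable (fun x ↦ ‖f x‖ ^ p) μ) :
    ENNReal.ofReal (LqNorm μ p f) = eLpNorm' f p μ := by
  have hpow (x : α) : 0 ≤ ‖f x‖ ^ p := rpow_nonneg (norm_nonneg _) _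
  rw [eLpNorm'_eq_lintegral_enorm, LqNorm,
    ← ENNReal.ofReal_rpow_of_nonneg (integral_nonneg hpow) (by positivity),
    ofReal_integral_eq_lintegral_ofReal hf (.of_forall hpow)]
  simp only [← ENNReal.ofReal_rpow_of_nonneg (norm_nonneg _) hp.le, ofReal_norm]

theorem LqNorm_le_of_eLpNorm'_le_ofReal (hp : 0 < p) {t : ℝ} (ht : 0 ≤ t)
    (hf : eLpNorm' f p μ ≤ ENNReal.ofReal t) : LqNorm μ p f ≤ t := by
  by_cases hint : Integrable (fun x ↦ ‖f x‖ ^ p) μ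
  · rwa [← ENNReal.ofReal_le_ofReal_iff ht, ofReal_LqNorm hp hint]
  · rwa [LqNorm, integral_undef hint, zero_rpow (one_div_ne_zero hp.ne')]

end LqNorm

section Interpolation

variable {E : Type*} [NormedAddCommGroup E] [NormedSpace ℝ E] [FiniteDimensional ℝ E]
  [MeasurableSpace E] [BorelSpace E] (μ : Measure E) [μ.IsAddHaarMeasure]
  {𝕜 F : Type*} [NormedField 𝕜] [NormedAddCommGroup F] [NormedSpace 𝕜 F] [NormedSpace ℝ F]
  {Ω : Set E} {q r : ℝ}

theorem eLpNorm'_smul_le_of_ae_mem_recessionCone {h R : ℝ} {κ : ℝ≥0∞} {ν : Measure E}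
    [IsProbabilityMeasure ν] (hν : ν ≤ κ • μ) (hνΩ : ∀ᵐ z ∂ν, z ∈ recessionCone Ω ∧ ‖z‖ ≤ R)
    (hΩ : IsOpen Ω) (hq : 1 ≤ q) (hqr : q ≤ r) (hr : finrank ℝ E < r) (hh : 0 < h)
    {a : E → 𝕜} (ha : AEStronglyMeasurable a (μ.restrict Ω)) {b : E → F}
    (hb : ContDiffOn ℝ 1 b Ω) :
    eLpNorm' (fun x ↦ a x • b x) q (μ.restrict Ω) ≤
      κ ^ (1 / r) * ENNReal.ofReal h ^ (-(finrank ℝ E / r)) * eLpNorm' a r (μ.restrict Ω) *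
        (eLpNorm' b q (μ.restrict Ω) +
          ENNReal.ofReal (h * R) * (ENNReal.ofReal (1 / (1 - finrank ℝ E / r)) *
            eLpNorm' (fderiv ℝ b) q (μ.restrict Ω))) := by
  have key := eLpNorm'_mul_enorm_le_of_ae_mem_recessionCone hν hνΩ hΩ hq hqr hr hh hb
    ha.stronglyMeasurable_mk.enorm
  rw [eLpNorm'_enorm, ← eLpNorm'_congr_ae ha.ae_eq_mk] at key
  refine (eLpNorm'_mono_enorm_ae (by linarith) ?_).trans key
  filter_upwards [ha.ae_eq_mk] with x hx
  rw [enorm_eq_self, ← hx, enorm_smul]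

theorem exists_LqNorm_smul_le (hΩ : IsOpen Ω) (hcone : (interior (recessionCone Ω)).Nonempty)
    (hq : 1 ≤ q) (hqr : q ≤ r) (hr : finrank ℝ E < r) :
    ∃ k m : ℝ, 0 < k ∧ 0 < m ∧ ∀ h : ℝ, 0 < h →
      ∀ a : E → 𝕜, AEStronglyMeasurable a (μ.restrict Ω) →
        IntegrableOn (fun x ↦ ‖a x‖ ^ r) Ω μ →
      ∀ b : E → F, ContDiffOn ℝ 1 b Ω →
        IntegrableOn (fun x ↦ ‖b x‖ ^ q) Ω μ →
        IntegrableOn (fun x ↦ ‖fderiv ℝ b x‖ ^ q) Ω μ →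
        LqNorm (μ.restrict Ω) q (fun x ↦ a x • b x) ≤
          k * h ^ (-(finrank ℝ E / r)) * LqNorm (μ.restrict Ω) r a *
            (LqNorm (μ.restrict Ω) q b + h * m * LqNorm (μ.restrict Ω) q (fderiv ℝ b)) := by
  have hq0 : 0 < q := by linarith
  have hr0 : 0 < r := by linarith
  have hθ : 0 < 1 - finrank ℝ E / r := sub_pos.2 ((div_lt_one hr0).2 hr)
  obtain ⟨ν, κ, R, _, hκ, hR, hν, hνΩ⟩ := exists_isProbabilityMeasure_le_smul μ hcone
  refine ⟨κ ^ (1 / r), R * (1 / (1 - finrank ℝ E / r)), by positivity, by positivity,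
    fun h hh a ha hra b hb hqb hqb' ↦ ?_⟩
  have hA : 0 ≤ LqNorm (μ.restrict Ω) r a := LqNorm_nonneg
  have hB : 0 ≤ LqNorm (μ.restrict Ω) q b := LqNorm_nonneg
  have hG : 0 ≤ LqNorm (μ.restrict Ω) q (fderiv ℝ b) := LqNorm_nonneg
  refine LqNorm_le_of_eLpNorm'_le_ofReal hq0 (by positivity)
    ((eLpNorm'_smul_le_of_ae_mem_recessionCone μ hν hνΩ hΩ hq hqr hr hh ha hb).trans_eq ?_)
  rw [← ofReal_LqNorm hr0 hra, ← ofReal_LqNorm hq0 hqb, ← ofReal_LqNorm hq0 hqb',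
    ENNReal.ofReal_rpow_of_pos hκ, ENNReal.ofReal_rpow_of_pos hh,
    ← ENNReal.ofReal_mul (by positivity), ← ENNReal.ofReal_mul (by positivity),
    ← ENNReal.ofReal_mul (by positivity), ← ENNReal.ofReal_mul (by positivity),
    ← ENNReal.ofReal_add (by positivity) (by positivity), ← ENNReal.ofReal_mul (by positivity)]
  ring_nf

theorem stmt_5_general (hΩ : IsOpen Ω) (hcone : (interior (recessionCone Ω)).Nonempty)
    (hq : 1 ≤ q) (hqr : q ≤ r) (hr : finrank ℝ E < r) :
    ∃ C : ℝ, 0 < C ∧ ∀ ε : ℝ, 0 < ε →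
      ∀ a : E → 𝕜, AEStronglyMeasurable a (μ.restrict Ω) →
        IntegrableOn (fun x ↦ ‖a x‖ ^ r) Ω μ →
      ∀ b : E → F, ContDiffOn ℝ 1 b Ω →
        IntegrableOn (fun x ↦ ‖b x‖ ^ q) Ω μ →
        IntegrableOn (fun x ↦ ‖fderiv ℝ b x‖ ^ q) Ω μ →
        LqNorm (μ.restrict Ω) q (fun x ↦ a x • b x) ≤
          ε * LqNorm (μ.restrict Ω) q (fderiv ℝ b) +
            C * ε ^ (-(finrank ℝ E : ℝ) / (r - finrank ℝ E)) *
              LqNorm (μ.restrict Ω) r a ^ (r / (r - finrank ℝ E)) *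
              LqNorm (μ.restrict Ω) q b := by
  obtain ⟨k, m, hk, hm, hkm⟩ := exists_LqNorm_smul_le (𝕜 := 𝕜) (F := F) μ hΩ hcone hq hqr hr
  refine ⟨k * (k * m) ^ (finrank ℝ E / (r - finrank ℝ E)), by positivity,
    fun ε hε a ha hra b hb hqb hqb' ↦ ?_⟩
  exact le_add_mul_rpow_of_forall_pos_le_mul_add (by linarith) hr hk hm LqNorm_nonneg LqNorm_nonneg
    hε fun h hh ↦ hkm h hh a ha hra b hb hqb hqb'

end Interpolation

section HalfSpace

variable {N : ℕ} (hN : 1 ≤ N)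

theorem isOpen_upperHalf : IsOpen (upperHalf N hN) :=
  isOpen_lt continuous_const (by fun_prop)

theorem upperHalf_subset_recessionCone : upperHalf N hN ⊆ recessionCone (upperHalf N hN) :=
  fun _ hv _ hx _ ht ↦ add_pos hx (mul_pos ht hv)

theorem interior_recessionCone_upperHalf_nonempty :
    (interior (recessionCone (upperHalf N hN))).Nonempty := by
  refine ⟨EuclideanSpace.single ⟨N - 1, by omega⟩ 1,
    interior_maximal (upperHalf_subset_recessionCone hN) (isOpen_upperHalf hN) ?_⟩
  simp [upperHalf]

end HalfSpace

/-- Lemma 4.3: `‖ab‖_{L^q(ℝ^N_+)} ≤ ε‖∇b‖_{L^q(ℝ^N_+)}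
  + C ε^{-N/(r-N)} ‖a‖_{L^r(ℝ^N_+)}^{r/(r-N)} ‖b‖_{L^q(ℝ^N_+)}`. -/
theorem stmt_5 (N : ℕ) (hN : 1 ≤ N) (q r : ℝ) (hq1 : 1 < q) (hrN : (N : ℝ) < r)
    (hqr : q ≤ r) :
    ∃ C : ℝ, 0 < C ∧ ∀ ε : ℝ, 0 < ε →
      ∀ a : EuclideanSpace ℝ (Fin N) → ℂ, Measurable a →
        IntegrableOn (fun x => ‖a x‖ ^ r) (upperHalf N hN) volume →
      ∀ b : EuclideanSpace ℝ (Fin N) → ℂ, ContDiff ℝ 1 b →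
        IntegrableOn (fun x => ‖b x‖ ^ q) (upperHalf N hN) volume →
        IntegrableOn (fun x => ‖fderiv ℝ b x‖ ^ q) (upperHalf N hN) volume →
        LqNorm (volume.restrict (upperHalf N hN)) q (fun x => a x * b x) ≤
          ε * LqNorm (volume.restrict (upperHalf N hN)) q (fun x => fderiv ℝ b x) +
            C * ε ^ (-(N : ℝ) / (r - N)) *
              (LqNorm (volume.restrict (upperHalf N hN)) r a) ^ (r / (r - N)) *
              LqNorm (volume.restrict (upperHalf N hN)) q b := by
  obtain ⟨C, hC, hle⟩ := stmt_5_general (𝕜 := ℂ) (F := ℂ) volume (isOpen_upperHalf hN)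
    (interior_recessionCone_upperHalf_nonempty hN) hq1.le hqr (by simpa using hrN)
  rw [finrank_euclideanSpace_fin] at hle
  exact ⟨C, hC, fun ε hε a ha hra b hb ↦ hle ε hε a ha.aestronglyMeasurable hra b hb.contDiffOn⟩
end

section
/- For every integer N ≥ 1 there exists a constant C > 0 with the following property: for every real R > e^e there exists a smooth function ψ_R : ℝ^N → ℝ such that 0 ≤ ψ_R(x) ≤ 1 for all x; ψ_R(x) = 1 whenever ‖x‖ ≤ exp(√(log R)); ψ_R(x) = 0 whenever ‖x‖ ≥ R; and ‖∇ψ_R(x)‖ ≤ (C / log log R) · 1/(‖x‖ · log ‖x‖) for every x with exp(√(log R)) ≤ ‖x‖ ≤ R. -/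
open Real

/-!
For a strictly increasing smooth `Φ` on `(c, ∞)` and `c < a < b`, rescale `Φ` affinely so that it
takes the value `1` at `a` and `0` at `b`, and apply the smooth transition function. The resulting
radial cut-off has gradient at most `M * Φ' / (Φ b - Φ a)`, where `M` bounds the derivative of the
transition function. For `Φ r = log (log r)`, `a = exp √(log R)` and `b = R` one has
`Φ' r = 1 / (r * log r)` and `Φ b - Φ a = log (log R) / 2`. The constant `2 * M` thus depends
neither on `R` nor on the dimension.
-/

section Radial

variable {E F : Type*} [NormedAddCommGroup E] [InnerProductSpace ℝ E]
  [NormedAddCommGroup F] [NormedSpace ℝ F]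

theorem contDiff_comp_norm {n : WithTop ℕ∞} {φ : ℝ → F} {v : F} (hφ : ContDiff ℝ n φ)
    (hv : ∀ᶠ r in nhds 0, φ r = v) : ContDiff ℝ n fun x : E ↦ φ ‖x‖ := by
  refine contDiff_iff_contDiffAt.2 fun x ↦ ?_
  rcases eq_or_ne x 0 with rfl | hx
  · exact contDiffAt_const.congr_of_eventuallyEq (tendsto_norm_zero.eventually hv)
  · exact hφ.contDiffAt.comp x (contDiffAt_norm ℝ hx)

theorem norm_fderiv_comp_norm {φ : ℝ → F} {φ' : F} {x : E} (hx : x ≠ 0)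
    (hφ : HasDerivAt φ φ' ‖x‖) : ‖fderiv ℝ (fun y : E ↦ φ ‖y‖) x‖ = ‖φ'‖ := by
  have : Nontrivial E := ⟨x, 0, hx⟩
  have hnorm : DifferentiableAt ℝ (fun y : E ↦ ‖y‖) x := differentiableAt_id.norm ℝ hx
  have hcomp : HasFDerivAt (fun y : E ↦ φ ‖y‖) ((fderiv ℝ (fun y : E ↦ ‖y‖) x).smulRight φ') x :=
    hφ.hasFDerivAt.comp x hnorm.hasFDerivAt
  rw [hcomp.fderiv, ContinuousLinearMap.norm_smulRight_apply, norm_fderiv_norm hnorm, one_mul]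

end Radial

section SmoothTransition

theorem hasDerivAt_smoothTransition (x : ℝ) :
    HasDerivAt smoothTransition (deriv smoothTransition x) x :=
  (smoothTransition.contDiffAt.differentiableAt (n := 1) one_ne_zero).hasDerivAt

theorem deriv_smoothTransition_of_nonpos {x : ℝ} (hx : x ≤ 0) : deriv smoothTransition x = 0 := by
  refine IsLocalMin.deriv_eq_zero (Filter.Eventually.of_forall fun y ↦ ?_)
  rw [smoothTransition.zero_of_nonpos hx]
  exact smoothTransition.nonneg y

theorem deriv_smoothTransition_of_one_le {x : ℝ} (hx : 1 ≤ x) : deriv smoothTransition x = 0 := by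
  refine IsLocalMax.deriv_eq_zero (Filter.Eventually.of_forall fun y ↦ ?_)
  rw [smoothTransition.one_of_one_le hx]
  exact smoothTransition.le_one y

theorem exists_abs_deriv_smoothTransition_le :
    ∃ M, 0 < M ∧ ∀ x, |deriv smoothTransition x| ≤ M := by
  have hcont : Continuous (deriv smoothTransition) :=
    (smoothTransition.contDiff (n := 1)).continuous_deriv le_rfl
  have hsupp : HasCompactSupport (deriv smoothTransition) := by
    refine .intro (isCompact_Icc (a := 0) (b := 1)) fun x hx ↦ ?_
    rcases le_total x 0 with h0 | h0
    · exact deriv_smoothTransition_of_nonpos h0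
    · exact deriv_smoothTransition_of_one_le (not_le.1 fun h1 ↦ hx ⟨h0, h1⟩).le
  obtain ⟨M, hM⟩ := hcont.bounded_above_of_compact_support hsupp
  exact ⟨max M 1, by positivity, fun x ↦ (hM x).trans (le_max_left M 1)⟩

end SmoothTransition

/-- The one-dimensional cut-off equal to `1` on `(-∞, a]` and `0` on `[b, ∞)`, whose transition is
linear in the scale `Φ` up to `Real.smoothTransition`. The case distinction makes the values of `Φ`
far to the left of `a`, where `Φ` need not be defined in any useful sense, irrelevant. -/
noncomputable def cutoffProfile (Φ : ℝ → ℝ) (a b r : ℝ) : ℝ :=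
  if r ≤ a then 1 else smoothTransition ((Φ b - Φ r) / (Φ b - Φ a))

namespace cutoffProfile

variable {Φ : ℝ → ℝ} {a b c r : ℝ}

theorem mem_Icc (Φ : ℝ → ℝ) (a b r : ℝ) : cutoffProfile Φ a b r ∈ Set.Icc 0 1 := by
  unfold cutoffProfile
  split_ifs
  · exact ⟨zero_le_one, le_rfl⟩
  · exact ⟨smoothTransition.nonneg _, smoothTransition.le_one _⟩

theorem eq_one_of_le (h : r ≤ a) : cutoffProfile Φ a b r = 1 :=
  if_pos h

theorem eq_zero_of_le (hΦ : StrictMonoOn Φ (Set.Ioi c)) (hca : c < a) (hab : a < b) (h : b ≤ r) :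
    cutoffProfile Φ a b r = 0 := by
  have hcb : c < b := hca.trans hab
  have hΦab : Φ a < Φ b := hΦ hca hcb hab
  have hΦbr : Φ b ≤ Φ r := hΦ.monotoneOn hcb (hcb.trans_le h) h
  rw [cutoffProfile, if_neg (hab.trans_le h).not_ge]
  exact smoothTransition.zero_of_nonpos
    (div_nonpos_of_nonpos_of_nonneg (by linarith) (by linarith))

theorem eqOn_smoothTransition (hΦ : StrictMonoOn Φ (Set.Ioi c)) (hca : c < a) (hab : a < b) :
    Set.EqOn (cutoffProfile Φ a b)
      (fun r ↦ smoothTransition ((Φ b - Φ r) / (Φ b - Φ a))) (Set.Ioi c) := by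
  intro r hr
  rcases le_or_gt r a with hra | hra
  · have hΦab : Φ a < Φ b := hΦ hca (hca.trans hab) hab
    have hΦra : Φ r ≤ Φ a := hΦ.monotoneOn hr hca hra
    have hscale : 1 ≤ (Φ b - Φ r) / (Φ b - Φ a) := (one_le_div (by linarith)).2 (by linarith)
    exact (eq_one_of_le hra).trans (smoothTransition.one_of_one_le hscale).symm
  · exact if_neg hra.not_ge

theorem contDiff {n : ℕ∞} (hΦ : StrictMonoOn Φ (Set.Ioi c)) (hn : ContDiffOn ℝ n Φ (Set.Ioi c))
    (hca : c < a) (hab : a < b) : ContDiff ℝ n (cutoffProfile Φ a b) := by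
  have hleft : ContDiffOn ℝ n (cutoffProfile Φ a b) (Set.Iio a) :=
    contDiffOn_const.congr fun r hr ↦ eq_one_of_le (le_of_lt hr)
  have hright : ContDiffOn ℝ n (cutoffProfile Φ a b) (Set.Ioi c) :=
    (smoothTransition.contDiff.comp_contDiffOn ((contDiffOn_const.sub hn).div_const _)).congr
      (eqOn_smoothTransition hΦ hca hab)
  exact contDiff_of_contDiffOn_union_of_isOpen hleft hright (Set.Iio_union_Ioi_of_lt hca)
    isOpen_Iio isOpen_Ioi

theorem hasDerivAt {Φ' : ℝ} (hΦ : StrictMonoOn Φ (Set.Ioi c)) (hca : c < a) (hab : a < b)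
    (hr : c < r) (hΦ' : HasDerivAt Φ Φ' r) :
    HasDerivAt (cutoffProfile Φ a b)
      (deriv smoothTransition ((Φ b - Φ r) / (Φ b - Φ a)) * (-Φ' / (Φ b - Φ a))) r :=
  ((hasDerivAt_smoothTransition _).comp r ((hΦ'.const_sub (Φ b)).div_const _)).congr_of_eventuallyEq
    ((eqOn_smoothTransition hΦ hca hab).eventuallyEq_of_mem (Ioi_mem_nhds hr))

theorem norm_fderiv_comp_norm_le {E : Type*} [NormedAddCommGroup E] [InnerProductSpace ℝ E]
    {x : E} {M Φ' : ℝ} (hM : ∀ t, |deriv smoothTransition t| ≤ M)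
    (hΦ : StrictMonoOn Φ (Set.Ioi c)) (hca : c < a) (hab : a < b)
    (hx : x ≠ 0) (hcx : c < ‖x‖) (hΦ' : HasDerivAt Φ Φ' ‖x‖) :
    ‖fderiv ℝ (fun y : E ↦ cutoffProfile Φ a b ‖y‖) x‖ ≤ M * (|Φ'| / (Φ b - Φ a)) := by
  have hΦab : 0 < Φ b - Φ a := sub_pos.2 (hΦ hca (hca.trans hab) hab)
  rw [norm_fderiv_comp_norm hx (cutoffProfile.hasDerivAt hΦ hca hab hcx hΦ'), norm_mul, norm_div,
    norm_neg, norm_of_nonneg hΦab.le, norm_eq_abs, norm_eq_abs]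
  gcongr
  exact hM _

end cutoffProfile

section LogLog

theorem strictMonoOn_log_log : StrictMonoOn (fun r ↦ log (log r)) (Set.Ioi 1) :=
  fun _ hr _ _ hrs ↦ log_lt_log (log_pos hr) (log_lt_log (zero_lt_one.trans hr) hrs)

theorem contDiffOn_log_log {n : WithTop ℕ∞} : ContDiffOn ℝ n (fun r ↦ log (log r)) (Set.Ioi 1) :=
  (contDiffOn_id.log fun _ hr ↦ (zero_lt_one.trans hr).ne').log fun _ hr ↦ (log_pos hr).ne'

theorem hasDerivAt_log_log {r : ℝ} (hr : 1 < r) :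
    HasDerivAt (fun r ↦ log (log r)) (1 / (r * log r)) r := by
  have h := (hasDerivAt_log (zero_lt_one.trans hr).ne').log (log_pos hr).ne'
  rwa [inv_eq_one_div, div_div] at h

theorem one_lt_exp_sqrt_log {R : ℝ} (hR : 1 < R) : 1 < exp √(log R) :=
  one_lt_exp_iff.2 (sqrt_pos.2 (log_pos hR))

theorem exp_sqrt_log_lt {R : ℝ} (hR : exp 1 < R) : exp √(log R) < R := by
  have hR0 : 0 < R := (exp_pos 1).trans hR
  have hlog : 1 < log R := (lt_log_iff_exp_lt hR0).2 hR
  rw [← lt_log_iff_exp_lt hR0, sqrt_lt' (by linarith)]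
  nlinarith

theorem log_log_sub_log_log_exp_sqrt_log {R : ℝ} (hR : 1 ≤ R) :
    log (log R) - log (log (exp √(log R))) = log (log R) / 2 := by
  rw [log_exp, log_sqrt (log_nonneg hR)]
  ring

end LogLog

theorem stmt_6_general.{u} :
    ∃ C : ℝ, 0 < C ∧ ∀ (E : Type u) [NormedAddCommGroup E] [InnerProductSpace ℝ E] (R : ℝ),
      exp 1 < R → ∃ ψ : E → ℝ,
        ContDiff ℝ (⊤ : ℕ∞) ψ ∧
        (∀ x, ψ x ∈ Set.Icc (0 : ℝ) 1) ∧
        (∀ x, ‖x‖ ≤ exp √(log R) → ψ x = 1) ∧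
        (∀ x, R ≤ ‖x‖ → ψ x = 0) ∧
        (∀ x, 1 < ‖x‖ → ‖fderiv ℝ ψ x‖ ≤ (C / log (log R)) * (1 / (‖x‖ * log ‖x‖))) := by
  obtain ⟨M, hM0, hM⟩ := exists_abs_deriv_smoothTransition_le
  refine ⟨2 * M, by positivity, fun E _ _ R hR ↦ ?_⟩
  have hR1 : 1 < R := (one_lt_exp_iff.2 one_pos).trans hR
  have ha : 1 < exp √(log R) := one_lt_exp_sqrt_log hR1
  have hab : exp √(log R) < R := exp_sqrt_log_lt hR
  refine ⟨fun x ↦ cutoffProfile (fun r ↦ log (log r)) (exp √(log R)) R ‖x‖, ?_,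
    fun x ↦ cutoffProfile.mem_Icc _ _ _ _, fun x ↦ cutoffProfile.eq_one_of_le,
    fun x ↦ cutoffProfile.eq_zero_of_le strictMonoOn_log_log ha hab, fun x hx ↦ ?_⟩
  · exact contDiff_comp_norm
      (cutoffProfile.contDiff strictMonoOn_log_log contDiffOn_log_log ha hab)
      ((eventually_le_nhds (exp_pos _)).mono fun r ↦ cutoffProfile.eq_one_of_le)
  · have hL : 0 < log (log R) := log_pos ((lt_log_iff_exp_lt (by positivity)).2 hR)
    have hlog : 0 < log ‖x‖ := log_pos hx
    have hgrad := cutoffProfile.norm_fderiv_comp_norm_le hM strictMonoOn_log_log ha hab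
      (norm_pos_iff.1 (zero_lt_one.trans hx)) hx (hasDerivAt_log_log hx)
    rw [log_log_sub_log_log_exp_sqrt_log hR1.le, abs_of_pos (by positivity)] at hgrad
    exact hgrad.trans_eq (by field_simp)

/-- The cut-off function of Sobolev type `ψ_R` with gradient estimate (3.12). -/
theorem stmt_6 (N : ℕ) (hN : 1 ≤ N) :
    ∃ C : ℝ, 0 < C ∧ ∀ R : ℝ, Real.exp (Real.exp 1) < R →
      ∃ ψ : EuclideanSpace ℝ (Fin N) → ℝ,
        ContDiff ℝ (⊤ : ℕ∞) ψ ∧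
        (∀ x, ψ x ∈ Set.Icc (0 : ℝ) 1) ∧
        (∀ x, ‖x‖ ≤ Real.exp (Real.sqrt (Real.log R)) → ψ x = 1) ∧
        (∀ x, R ≤ ‖x‖ → ψ x = 0) ∧
        (∀ x, Real.exp (Real.sqrt (Real.log R)) ≤ ‖x‖ → ‖x‖ ≤ R →
          ‖fderiv ℝ ψ x‖ ≤ (C / Real.log (Real.log R)) * (1 / (‖x‖ * Real.log ‖x‖))) := by
  obtain ⟨C, hC, h⟩ := stmt_6_general
  refine ⟨C, hC, fun R hR ↦ ?_⟩
  have hR' : exp 1 < R := (exp_lt_exp.2 (by linarith [add_one_lt_exp one_ne_zero])).trans hR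
  obtain ⟨ψ, hsmooth, hIcc, hone, hzero, hgrad⟩ := h (EuclideanSpace ℝ (Fin N)) R hR'
  have ha : 1 < exp √(log R) := one_lt_exp_sqrt_log ((one_lt_exp_iff.2 one_pos).trans hR')
  exact ⟨ψ, hsmooth, hIcc, hone, hzero, fun x hx _ ↦ hgrad x (ha.trans_le hx)⟩
end

section
/- Let N ≥ 1 be an integer and q ∈ (1, ∞). Define d_q : ℝ^N → ℝ by d_q(x) = (1 + ‖x‖²)^{1/2} if q ≠ N, and d_q(x) = (1 + ‖x‖²)^{1/2} · log((2 + ‖x‖²)^{1/2}) if q = N. Then there exists a constant C = C(N, q) > 0 such that for every continuously differentiable function u : ℝ^N → ℂ with ∫_{ℝ^N} ‖∇u‖^q dx < ∞, there exists a constant c ∈ ℂ with ∫_{ℝ^N} |u(x) − c|^q / d_q(x)^q dx ≤ C^q ∫_{ℝ^N} ‖∇u(x)‖^q dx. -/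
open Real MeasureTheory

/-!
Along a ray, `|u x - u (r x)|` is at most `‖x‖` times the average over dilations
`∫ exp (σ s) ‖∇u (exp (σ s) x)‖ ds`, with `σ = -1` towards the origin and `σ = 1` towards infinity.
By Jensen's inequality and the scaling of Haar measure this average is bounded on `L^q` when
`σ (N - q) > 0`.

* If `q > N`, integrating from the origin gives the estimate with `c = u 0`.
* If `q < N`, integrating from infinity shows that `u` has a limit along almost every ray. Two
  parallel rays differ by a fixed translation, which costs a factor `r ^ (1 - N / q) → 0` after
  rescaling to distance `r`, so the limits agree almost everywhere; `c` is their common value.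
* If `q = N`, the logarithmic coordinate `t = log ‖x‖` turns the claim outside a ball into the
  one-dimensional Hardy inequality on each ray. The constant `c` comes from the Poincaré inequality
  on the ball, which also controls the boundary term.
-/

open Module Metric Set Filter Topology
open scoped ENNReal

section Jensen

variable {α : Type*} [MeasurableSpace α] {μ : Measure α} {q : ℝ}

lemma lintegral_rpow_le_measure_univ_rpow_mul (hq : 1 ≤ q) {f : α → ℝ≥0∞} (hf : AEMeasurable f μ) :
    (∫⁻ x, f x ∂μ) ^ q ≤ μ univ ^ (q - 1) * ∫⁻ x, f x ^ q ∂μ := by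
  have hq₀ : 0 < q := by linarith
  have hpow : 1 / q * q = 1 ∧ (1 - 1 / q) * q = q - 1 := by constructor <;> field_simp
  have h := eLpNorm'_le_eLpNorm'_mul_rpow_measure_univ one_pos hq hf.aestronglyMeasurable
  simp only [eLpNorm'_eq_lintegral_enorm, enorm_eq_self, ENNReal.rpow_one, div_one] at h
  calc (∫⁻ x, f x ∂μ) ^ q
      ≤ ((∫⁻ x, f x ^ q ∂μ) ^ (1 / q) * μ univ ^ (1 - 1 / q)) ^ q :=
        ENNReal.rpow_le_rpow h hq₀.le
    _ = μ univ ^ (q - 1) * ∫⁻ x, f x ^ q ∂μ := by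
        rw [ENNReal.mul_rpow_of_nonneg _ _ hq₀.le, ← ENNReal.rpow_mul, ← ENNReal.rpow_mul, hpow.1,
          hpow.2, ENNReal.rpow_one, mul_comm]

lemma lintegral_mul_rpow_le (hq : 1 ≤ q) {w f : α → ℝ≥0∞} (hw : Measurable w) (hf : Measurable f) :
    (∫⁻ x, w x * f x ∂μ) ^ q ≤ (∫⁻ x, w x ∂μ) ^ (q - 1) * ∫⁻ x, w x * f x ^ q ∂μ := by
  have h := lintegral_rpow_le_measure_univ_rpow_mul (μ := μ.withDensity w) hq hf.aemeasurable
  simpa only [lintegral_withDensity_eq_lintegral_mul _ hw hf,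
    lintegral_withDensity_eq_lintegral_mul _ hw (hf.pow_const q), Pi.mul_apply,
    withDensity_apply _ MeasurableSet.univ, Measure.restrict_univ] using h

end Jensen

section Dilation

variable {E : Type*} [NormedAddCommGroup E] [NormedSpace ℝ E] [MeasurableSpace E] [BorelSpace E]
  [FiniteDimensional ℝ E] (μ : Measure E) [μ.IsAddHaarMeasure] {q σ : ℝ}

lemma lintegral_comp_exp_smul (a : ℝ) (f : E → ℝ≥0∞) :
    ∫⁻ x, f (exp a • x) ∂μ = ENNReal.ofReal (exp (-(a * finrank ℝ E))) * ∫⁻ x, f x ∂μ := by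
  calc ∫⁻ x, f (exp a • x) ∂μ
      = ∫⁻ x, f x ∂μ.map (exp a • ·) :=
        ((Homeomorph.smulOfNeZero (exp a) (exp_pos a).ne').measurableEmbedding.lintegral_map f).symm
    _ = ENNReal.ofReal (exp (-(a * finrank ℝ E))) * ∫⁻ x, f x ∂μ := by
        rw [Measure.map_addHaar_smul μ (exp_pos a).ne', lintegral_smul_measure, smul_eq_mul,
          abs_of_pos (by positivity), mul_comm a, exp_neg, exp_nat_mul]

/-- The Hardy operator in dilation form, for `σ = ±1`: `‖x‖ * hardyOperator (-1) g x` is the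
integral of `g` over the segment from `0` to `x`, and `‖x‖ * hardyOperator 1 g x` its integral over
the ray from `x` to infinity. The substitution `s = |log r|` makes both cases one formula. -/
noncomputable def hardyOperator (σ : ℝ) (g : E → ℝ≥0∞) (x : E) : ℝ≥0∞ :=
  ∫⁻ s in Ioi (0 : ℝ), ENNReal.ofReal (exp (σ * s)) * g (exp (σ * s) • x)

lemma measurable_hardyOperator (σ : ℝ) {g : E → ℝ≥0∞} (hg : Measurable g) :
    Measurable (hardyOperator σ g) := by
  unfold hardyOperator
  fun_prop

lemma lintegral_exp_neg_mul_Ioi {ε : ℝ} (hε : 0 < ε) :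
    ∫⁻ s in Ioi (0 : ℝ), ENNReal.ofReal (exp (-ε * s)) = ENNReal.ofReal ε⁻¹ := by
  rw [← ofReal_integral_eq_lintegral_ofReal (integrableOn_exp_mul_Ioi (neg_neg_of_pos hε) 0)
    (ae_of_all _ fun s => (exp_pos _).le), integral_exp_mul_Ioi (neg_neg_of_pos hε)]
  simp

/-- Splitting `exp (σ s) = exp (-ε s) * exp ((σ + ε) s)`, Jensen's inequality for the weight
`exp (-ε s)` with `ε = σ (dim E - q) / q` yields the sharp constant `ε⁻¹ ^ q`. -/
theorem lintegral_hardyOperator_rpow_le (hq : 1 ≤ q) (hσ : 0 < σ * (finrank ℝ E - q))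
    {g : E → ℝ≥0∞} (hg : Measurable g) :
    ∫⁻ x, hardyOperator σ g x ^ q ∂μ ≤
      ENNReal.ofReal (q / (σ * (finrank ℝ E - q))) ^ q * ∫⁻ x, g x ^ q ∂μ := by
  have hq₀ : 0 < q := by linarith
  obtain ⟨ε, hε⟩ : ∃ ε, ε = σ * (finrank ℝ E - q) / q := ⟨_, rfl⟩
  have hε₀ : 0 < ε := hε ▸ by positivity
  let w : ℝ → ℝ≥0∞ := fun s => ENNReal.ofReal (exp (-ε * s))
  let f : E → ℝ → ℝ≥0∞ := fun x s => ENNReal.ofReal (exp ((σ + ε) * s)) * g (exp (σ * s) • x)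
  have hardyOperator_eq (x : E) : hardyOperator σ g x = ∫⁻ s in Ioi 0, w s * f x s := by
    simp only [hardyOperator, w, f, ← mul_assoc, ← ENNReal.ofReal_mul (exp_pos _).le, ← exp_add]
    ring_nf
  have slice (s : ℝ) : ∫⁻ x, w s * f x s ^ q ∂μ = w s * ∫⁻ x, g x ^ q ∂μ := by
    simp only [w, f, ENNReal.mul_rpow_of_nonneg _ _ hq₀.le, ENNReal.ofReal_rpow_of_pos (exp_pos _),
      ← mul_assoc, ← ENNReal.ofReal_mul (exp_pos _).le, ← exp_mul, ← exp_add]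
    rw [lintegral_const_mul _ (by fun_prop), lintegral_comp_exp_smul μ (σ * s) (g · ^ q),
      ← mul_assoc, ← ENNReal.ofReal_mul (exp_pos _).le, ← exp_add]
    congr 3
    rw [hε]
    field_simp
    ring
  calc ∫⁻ x, hardyOperator σ g x ^ q ∂μ
      ≤ ∫⁻ x, ENNReal.ofReal ε⁻¹ ^ (q - 1) * (∫⁻ s in Ioi 0, w s * f x s ^ q) ∂μ := by
        gcongr with x
        rw [hardyOperator_eq, ← lintegral_exp_neg_mul_Ioi hε₀]
        exact lintegral_mul_rpow_le hq (by fun_prop) (by fun_prop)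
    _ = ENNReal.ofReal ε⁻¹ ^ (q - 1) * ∫⁻ s in Ioi (0 : ℝ), ∫⁻ x, w s * f x s ^ q ∂μ := by
        rw [lintegral_const_mul _ (by fun_prop), lintegral_lintegral_swap (by fun_prop)]
    _ = ENNReal.ofReal ε⁻¹ ^ (q - 1) * ENNReal.ofReal ε⁻¹ * ∫⁻ x, g x ^ q ∂μ := by
        simp_rw [slice]
        rw [lintegral_mul_const _ (by fun_prop), lintegral_exp_neg_mul_Ioi hε₀, mul_assoc]
    _ = ENNReal.ofReal (q / (σ * (finrank ℝ E - q))) ^ q * ∫⁻ x, g x ^ q ∂μ := by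
        nth_rw 2 [← ENNReal.rpow_one (ENNReal.ofReal ε⁻¹)]
        rw [← ENNReal.rpow_add _ _ (by simpa using hε₀) ENNReal.ofReal_ne_top, sub_add_cancel, hε,
          inv_div]

end Dilation

section FundamentalTheorem

variable {E F : Type*} [NormedAddCommGroup E] [NormedSpace ℝ E] [NormedAddCommGroup F]
  [NormedSpace ℝ F] {u : E → F}

lemma enorm_comp_sub_comp_le_lintegral (hu : ContDiff ℝ 1 u) {γ : ℝ → E} (hγ : ContDiff ℝ 1 γ)
    {a b : ℝ} (hab : a ≤ b) :
    ‖u (γ b) - u (γ a)‖ₑ ≤ ∫⁻ s in Icc a b, ‖deriv γ s‖ₑ * ‖fderiv ℝ u (γ s)‖ₑ := by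
  refine (enorm_sub_le_lintegral_deriv_of_contDiffOn_Icc (hu.comp hγ).contDiffOn hab).trans ?_
  gcongr with s
  rw [fderiv_comp_deriv s (hu.differentiable one_ne_zero _) (hγ.differentiable one_ne_zero s),
    mul_comm]
  exact ContinuousLinearMap.le_opENorm _ _

lemma enorm_sub_le_lintegral_segment (hu : ContDiff ℝ 1 u) (x h : E) :
    ‖u (x + h) - u x‖ₑ ≤ ‖h‖ₑ * ∫⁻ s in Icc (0 : ℝ) 1, ‖fderiv ℝ u (x + s • h)‖ₑ := by
  have hγ (s : ℝ) : HasDerivAt (fun s : ℝ => x + s • h) h s := by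
    simpa using ((hasDerivAt_id s).smul_const h).const_add x
  have := enorm_comp_sub_comp_le_lintegral hu (γ := fun s => x + s • h) (by fun_prop) zero_le_one
  simp only [(hγ _).deriv, one_smul, zero_smul, add_zero] at this
  rwa [lintegral_const_mul' _ _ enorm_ne_top] at this

lemma enorm_sub_le_lintegral_ray (hu : ContDiff ℝ 1 u) {σ : ℝ} (hσ : |σ| = 1) (x : E) {a b : ℝ}
    (hab : a ≤ b) :
    ‖u (exp (σ * b) • x) - u (exp (σ * a) • x)‖ₑ ≤
      ‖x‖ₑ * ∫⁻ s in Icc a b, ENNReal.ofReal (exp (σ * s)) * ‖fderiv ℝ u (exp (σ * s) • x)‖ₑ := by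
  have hγ (s : ℝ) : HasDerivAt (fun s => exp (σ * s) • x) ((exp (σ * s) * σ) • x) s := by
    simpa using ((hasDerivAt_id s).const_mul σ).exp.smul_const x
  have := enorm_comp_sub_comp_le_lintegral hu (γ := fun s => exp (σ * s) • x) (by fun_prop) hab
  simp only [(hγ _).deriv, enorm_smul, enorm_mul, ← ofReal_norm σ, norm_eq_abs, hσ,
    ENNReal.ofReal_one, mul_one, Real.enorm_of_nonneg (exp_pos _).le] at this
  rw [← lintegral_const_mul' _ _ enorm_ne_top]
  simpa only [mul_comm ‖x‖ₑ, mul_right_comm] using this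

end FundamentalTheorem

section Translation

variable {E F : Type*} [NormedAddCommGroup E] [NormedSpace ℝ E] [MeasurableSpace E] [BorelSpace E]
  [FiniteDimensional ℝ E] (μ : Measure E) [μ.IsAddHaarMeasure] [NormedAddCommGroup F]
  [NormedSpace ℝ F] {q : ℝ} {u : E → F}

theorem lintegral_enorm_translate_sub_rpow_le (hq : 1 ≤ q) (hu : ContDiff ℝ 1 u) (h : E) :
    ∫⁻ x, ‖u (x + h) - u x‖ₑ ^ q ∂μ ≤ ‖h‖ₑ ^ q * ∫⁻ x, ‖fderiv ℝ u x‖ₑ ^ q ∂μ := by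
  have hq₀ : 0 < q := by linarith
  have hDu : Measurable fun p : E × ℝ => ‖fderiv ℝ u (p.1 + p.2 • h)‖ₑ ^ q :=
    (by fun_prop : Continuous fun p : E × ℝ => ‖fderiv ℝ u (p.1 + p.2 • h)‖ₑ).measurable.pow_const q
  calc ∫⁻ x, ‖u (x + h) - u x‖ₑ ^ q ∂μ
      ≤ ∫⁻ x, ‖h‖ₑ ^ q * (∫⁻ s in Icc (0 : ℝ) 1, ‖fderiv ℝ u (x + s • h)‖ₑ ^ q) ∂μ := by
        gcongr with x
        refine (ENNReal.rpow_le_rpow (enorm_sub_le_lintegral_segment hu x h) hq₀.le).trans ?_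
        rw [ENNReal.mul_rpow_of_nonneg _ _ hq₀.le]
        gcongr
        simpa using lintegral_rpow_le_measure_univ_rpow_mul (μ := volume.restrict (Icc (0 : ℝ) 1))
          hq (f := fun s => ‖fderiv ℝ u (x + s • h)‖ₑ)
          (by fun_prop : Continuous _).measurable.aemeasurable
    _ = ‖h‖ₑ ^ q * ∫⁻ s in Icc (0 : ℝ) 1, ∫⁻ x, ‖fderiv ℝ u (x + s • h)‖ₑ ^ q ∂μ := by
        rw [lintegral_const_mul' _ _ (by finiteness), lintegral_lintegral_swap hDu.aemeasurable]
    _ = ‖h‖ₑ ^ q * ∫⁻ x, ‖fderiv ℝ u x‖ₑ ^ q ∂μ := by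
        simp [fun s : ℝ => lintegral_add_right_eq_self (μ := μ) (‖fderiv ℝ u ·‖ₑ ^ q) (s • h)]

lemma lintegral_closedBall_lintegral_enorm_sub_rpow_le (hq : 1 ≤ q) (hu : ContDiff ℝ 1 u)
    (z : E) (R : ℝ) :
    ∫⁻ x in closedBall z R, ∫⁻ y in closedBall z R, ‖u y - u x‖ₑ ^ q ∂μ ∂μ ≤
      μ (closedBall 0 (2 * R)) * (ENNReal.ofReal (2 * R) ^ q * ∫⁻ x, ‖fderiv ℝ u x‖ₑ ^ q ∂μ) := by
  have hu' : Measurable fun p : E × E => ‖u (p.1 + p.2) - u p.1‖ₑ ^ q :=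
    (by fun_prop : Continuous fun p : E × E => ‖u (p.1 + p.2) - u p.1‖ₑ).measurable.pow_const q
  calc ∫⁻ x in closedBall z R, ∫⁻ y in closedBall z R, ‖u y - u x‖ₑ ^ q ∂μ ∂μ
      ≤ ∫⁻ x in closedBall z R, ∫⁻ h in closedBall 0 (2 * R), ‖u (x + h) - u x‖ₑ ^ q ∂μ ∂μ := by
        refine setLIntegral_mono' measurableSet_closedBall fun x hx => ?_
        rw [← (measurePreserving_add_left μ x).setLIntegral_comp_preimage_emb
          (measurableEmbedding_addLeft x)]
        refine lintegral_mono_set fun h hh => ?_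
        rw [mem_closedBall_zero_iff, ← add_sub_cancel_left x h, ← dist_eq_norm, two_mul]
        exact dist_triangle_right _ _ z |>.trans (add_le_add hh hx)
    _ ≤ ∫⁻ x, ∫⁻ h in closedBall 0 (2 * R), ‖u (x + h) - u x‖ₑ ^ q ∂μ ∂μ :=
        setLIntegral_le_lintegral _ _
    _ = ∫⁻ h in closedBall 0 (2 * R), ∫⁻ x, ‖u (x + h) - u x‖ₑ ^ q ∂μ ∂μ :=
        lintegral_lintegral_swap hu'.aemeasurable
    _ ≤ ∫⁻ _ in closedBall 0 (2 * R),
          ENNReal.ofReal (2 * R) ^ q * ∫⁻ x, ‖fderiv ℝ u x‖ₑ ^ q ∂μ ∂μ := by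
        refine setLIntegral_mono' measurableSet_closedBall fun h hh => ?_
        refine (lintegral_enorm_translate_sub_rpow_le μ hq hu h).trans ?_
        gcongr
        rw [← ofReal_norm]
        exact ENNReal.ofReal_le_ofReal (by simpa using hh)
    _ = μ (closedBall 0 (2 * R)) *
          (ENNReal.ofReal (2 * R) ^ q * ∫⁻ x, ‖fderiv ℝ u x‖ₑ ^ q ∂μ) := by
        rw [setLIntegral_const, mul_comm]

theorem exists_lintegral_closedBall_enorm_sub_rpow_le (hq : 1 ≤ q) (hu : ContDiff ℝ 1 u)
    (z : E) {R : ℝ} (hR : 0 < R) :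
    ∃ c, ∫⁻ x in closedBall z R, ‖u x - c‖ₑ ^ q ∂μ ≤
      2 ^ finrank ℝ E * ENNReal.ofReal (2 * R) ^ q * ∫⁻ x, ‖fderiv ℝ u x‖ₑ ^ q ∂μ := by
  have hB : μ (closedBall z R) ≠ 0 := (measure_closedBall_pos μ z hR).ne'
  have hB' : μ (closedBall z R) ≠ ∞ := measure_closedBall_lt_top.ne
  have hu' : Measurable fun p : E × E => ‖u p.2 - u p.1‖ₑ :=
    (by fun_prop : Continuous fun p : E × E => ‖u p.2 - u p.1‖ₑ).measurable
  obtain ⟨x, -, hx⟩ := exists_le_setLAverage hB hB'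
    ((hu'.pow_const q).lintegral_prod_right' (ν := μ.restrict (closedBall z R))).aemeasurable
  refine ⟨u x, hx.trans ?_⟩
  rw [setLAverage_eq]
  refine ENNReal.div_le_of_le_mul <|
    (lintegral_closedBall_lintegral_enorm_sub_rpow_le μ hq hu z R).trans_eq ?_
  rw [Measure.addHaar_closedBall_mul μ 0 two_pos.le hR.le, ← Measure.addHaar_closedBall_center μ z,
    ENNReal.ofReal_pow two_pos.le, ENNReal.ofReal_ofNat]
  ring

end Translation

section RayLimits

variable {E F : Type*} [NormedAddCommGroup E] [NormedSpace ℝ E] [NormedAddCommGroup F]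
  [NormedSpace ℝ F] {u : E → F}

lemma enorm_sub_le_hardyOperator_of_tendsto (hu : ContDiff ℝ 1 u) {σ : ℝ} (hσ : |σ| = 1) {x : E}
    {c : F} (hc : Tendsto (fun s => u (exp (σ * s) • x)) atTop (𝓝 c)) :
    ‖u x - c‖ₑ ≤ ‖x‖ₑ * hardyOperator σ (‖fderiv ℝ u ·‖ₑ) x := by
  rw [← enorm_neg, neg_sub]
  refine le_of_tendsto (hc.sub_const (u x)).enorm ((eventually_gt_atTop 0).mono fun s hs => ?_)
  have hray := enorm_sub_le_lintegral_ray hu hσ x hs.le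
  simp only [mul_zero, exp_zero, one_smul] at hray
  refine hray.trans ?_
  rw [← restrict_Ioc_eq_restrict_Icc]
  gcongr
  exact lintegral_mono_set Ioc_subset_Ioi_self

lemma exists_tendsto_ray_of_hardyOperator_ne_top [CompleteSpace F] (hu : ContDiff ℝ 1 u) {x : E}
    (hx : hardyOperator 1 (‖fderiv ℝ u ·‖ₑ) x ≠ ∞) :
    ∃ c, Tendsto (fun s => u (exp s • x)) atTop (𝓝 c) := by
  have hderiv (s : ℝ) :
      HasDerivAt (fun s => u (exp s • x)) (fderiv ℝ u (exp s • x) (exp s • x)) s :=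
    (hu.differentiable one_ne_zero _).hasFDerivAt.comp_hasDerivAt s
      ((hasDerivAt_exp s).smul_const x)
  have hcont : Continuous fun s => fderiv ℝ u (exp s • x) (exp s • x) :=
    ((hu.continuous_fderiv one_ne_zero).comp (by fun_prop)).clm_apply (by fun_prop)
  refine ⟨_, tendsto_limUnder_of_hasDerivAt_of_integrableOn_Ioi (a := 0) (fun s _ => hderiv s)
    ⟨hcont.aestronglyMeasurable, ?_⟩⟩
  calc ∫⁻ s in Ioi (0 : ℝ), ‖fderiv ℝ u (exp s • x) (exp s • x)‖ₑ
      ≤ ∫⁻ s in Ioi (0 : ℝ),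
          ‖x‖ₑ * (ENNReal.ofReal (exp (1 * s)) * ‖fderiv ℝ u (exp (1 * s) • x)‖ₑ) := by
        gcongr with s
        refine (ContinuousLinearMap.le_opENorm _ _).trans_eq ?_
        rw [one_mul, enorm_smul, Real.enorm_of_nonneg (exp_pos s).le]
        ring
    _ = ‖x‖ₑ * hardyOperator 1 (‖fderiv ℝ u ·‖ₑ) x := lintegral_const_mul' _ _ enorm_ne_top
    _ < ∞ := by finiteness

end RayLimits

section NoncriticalHardy

variable {E F : Type*} [NormedAddCommGroup E] [NormedSpace ℝ E] [MeasurableSpace E] [BorelSpace E]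
  [FiniteDimensional ℝ E] (μ : Measure E) [μ.IsAddHaarMeasure] [NormedAddCommGroup F]
  [NormedSpace ℝ F] {q : ℝ} {u : E → F}

theorem lintegral_enorm_sub_div_enorm_rpow_le_of_tendsto (hq : 1 ≤ q) (hu : ContDiff ℝ 1 u) {σ : ℝ}
    (hσ : |σ| = 1) (hσn : 0 < σ * (finrank ℝ E - q)) {c : F}
    (hc : ∀ᵐ x ∂μ, Tendsto (fun s => u (exp (σ * s) • x)) atTop (𝓝 c)) :
    ∫⁻ x, (‖u x - c‖ₑ / ‖x‖ₑ) ^ q ∂μ ≤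
      ENNReal.ofReal (q / (σ * (finrank ℝ E - q))) ^ q * ∫⁻ x, ‖fderiv ℝ u x‖ₑ ^ q ∂μ := by
  refine le_trans (lintegral_mono_ae (hc.mono fun x hx => ?_)) <|
    lintegral_hardyOperator_rpow_le μ hq hσn (hu.continuous_fderiv one_ne_zero).enorm.measurable
  gcongr
  exact ENNReal.div_le_of_le_mul' (enorm_sub_le_hardyOperator_of_tendsto hu hσ hx)

theorem lintegral_enorm_sub_div_enorm_rpow_le_of_finrank_lt (hq : 1 ≤ q) (hqn : finrank ℝ E < q)
    (hu : ContDiff ℝ 1 u) :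
    ∫⁻ x, (‖u x - u 0‖ₑ / ‖x‖ₑ) ^ q ∂μ ≤
      ENNReal.ofReal (q / (q - finrank ℝ E)) ^ q * ∫⁻ x, ‖fderiv ℝ u x‖ₑ ^ q ∂μ := by
  have hlim (x : E) : Tendsto (fun s => u (exp (-1 * s) • x)) atTop (𝓝 (u 0)) := by
    simp only [neg_one_mul]
    rw [← zero_smul ℝ x]
    exact (hu.continuous.tendsto _).comp (tendsto_exp_neg_atTop_nhds_zero.smul_const x)
  simpa only [neg_one_mul, neg_sub] using
    lintegral_enorm_sub_div_enorm_rpow_le_of_tendsto μ hq hu (σ := -1) (by simp) (by linarith)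
      (ae_of_all _ hlim)

lemma lintegral_enorm_translate_dilate_sub_rpow_le (hq : 1 ≤ q) (hu : ContDiff ℝ 1 u) (h : E)
    (t : ℝ) :
    ∫⁻ x, ‖u (exp t • (x + h)) - u (exp t • x)‖ₑ ^ q ∂μ ≤
      ENNReal.ofReal (exp (-(finrank ℝ E - q) * t)) *
        (‖h‖ₑ ^ q * ∫⁻ x, ‖fderiv ℝ u x‖ₑ ^ q ∂μ) := by
  simp only [smul_add]
  rw [lintegral_comp_exp_smul μ t fun y => ‖u (y + exp t • h) - u y‖ₑ ^ q]
  refine (mul_le_mul_right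
    (lintegral_enorm_translate_sub_rpow_le μ hq hu (exp t • h)) _).trans_eq ?_
  rw [enorm_smul, Real.enorm_of_nonneg (exp_pos _).le,
    ENNReal.mul_rpow_of_nonneg _ _ (by linarith), ENNReal.ofReal_rpow_of_pos (exp_pos _),
    mul_assoc, ← mul_assoc, ← ENNReal.ofReal_mul (exp_pos _).le, ← exp_mul, ← exp_add]
  ring_nf

lemma ae_liminf_enorm_translate_dilate_sub_eq_zero (hq : 1 ≤ q) (hqn : q < finrank ℝ E)
    (hu : ContDiff ℝ 1 u) (hI : ∫⁻ x, ‖fderiv ℝ u x‖ₑ ^ q ∂μ ≠ ∞) (h : E) :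
    ∀ᵐ x ∂μ, liminf (fun k : ℕ => ‖u (exp k • (x + h)) - u (exp k • x)‖ₑ ^ q) atTop = 0 := by
  have hmeas (k : ℕ) : Measurable fun x => ‖u (exp k • (x + h)) - u (exp k • x)‖ₑ ^ q :=
    (by fun_prop : Continuous fun x => ‖u (exp k • (x + h)) - u (exp k • x)‖ₑ).measurable.pow_const
      q
  have hexp : Tendsto (fun k : ℕ => exp (-(finrank ℝ E - q) * k)) atTop (𝓝 0) :=
    tendsto_exp_atBot.comp (tendsto_natCast_atTop_atTop.const_mul_atTop_of_neg (by linarith))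
  have hbound := ENNReal.Tendsto.mul_const (ENNReal.tendsto_ofReal hexp)
    (.inr (by finiteness : ‖h‖ₑ ^ q * ∫⁻ x, ‖fderiv ℝ u x‖ₑ ^ q ∂μ ≠ ∞))
  rw [ENNReal.ofReal_zero, zero_mul] at hbound
  have hzero := tendsto_of_tendsto_of_tendsto_of_le_of_le tendsto_const_nhds hbound
    (fun _ => zero_le) fun k : ℕ => lintegral_enorm_translate_dilate_sub_rpow_le μ hq hu h k
  refine (lintegral_eq_zero_iff (.liminf hmeas)).1 (le_antisymm ?_ zero_le)
  exact (lintegral_liminf_le hmeas).trans_eq hzero.liminf_eq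

theorem exists_ae_tendsto_ray [CompleteSpace F] (hq : 1 ≤ q) (hqn : q < finrank ℝ E)
    (hu : ContDiff ℝ 1 u) (hI : ∫⁻ x, ‖fderiv ℝ u x‖ₑ ^ q ∂μ ≠ ∞) :
    ∃ c, ∀ᵐ x ∂μ, Tendsto (fun s => u (exp s • x)) atTop (𝓝 c) := by
  have hq₀ : 0 < q := by linarith
  have hDu : Measurable (‖fderiv ℝ u ·‖ₑ) := (hu.continuous_fderiv one_ne_zero).enorm.measurable
  have hlim : ∀ᵐ x ∂μ, ∃ c, Tendsto (fun s => u (exp s • x)) atTop (𝓝 c) := by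
    have hint : ∫⁻ x, hardyOperator 1 (‖fderiv ℝ u ·‖ₑ) x ^ q ∂μ ≠ ∞ :=
      ne_top_of_le_ne_top (by finiteness)
        (lintegral_hardyOperator_rpow_le μ hq (σ := 1) (by linarith) hDu)
    filter_upwards [ae_lt_top ((measurable_hardyOperator 1 hDu).pow_const q) hint] with x hx
    exact exists_tendsto_ray_of_hardyOperator_ne_top hu
      ((ENNReal.rpow_lt_top_iff_of_pos hq₀).1 hx).ne
  have hliminf : ∀ᵐ x ∂μ, ∀ᵐ h ∂μ,
      liminf (fun k : ℕ => ‖u (exp k • (x + h)) - u (exp k • x)‖ₑ ^ q) atTop = 0 := by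
    refine (Measure.ae_ae_comm ?_).1
      (ae_of_all _ (ae_liminf_enorm_translate_dilate_sub_eq_zero μ hq hqn hu hI))
    refine (Measurable.liminf fun k => ?_) (measurableSet_singleton 0)
    exact (by fun_prop : Continuous fun p : E × E =>
      ‖u (exp k • (p.2 + p.1)) - u (exp k • p.2)‖ₑ).measurable.pow_const q
  obtain ⟨x, ⟨c, hc⟩, hx⟩ := (hlim.and hliminf).exists
  refine ⟨c, (eventually_add_left_iff μ x).1 ?_⟩
  filter_upwards [(eventually_add_left_iff μ x).2 hlim, hx] with h ⟨c', hc'⟩ hzero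
  have hdiff : Tendsto (fun k : ℕ => ‖u (exp k • (x + h)) - u (exp k • x)‖ₑ ^ q) atTop
      (𝓝 (‖c' - c‖ₑ ^ q)) :=
    (((hc'.sub hc).comp tendsto_natCast_atTop_atTop).enorm).ennrpow_const q
  rw [hdiff.liminf_eq, ENNReal.rpow_eq_zero_iff_of_pos hq₀, enorm_eq_zero, sub_eq_zero] at hzero
  rwa [← hzero]

theorem exists_lintegral_enorm_sub_div_enorm_rpow_le_of_lt_finrank [CompleteSpace F] (hq : 1 ≤ q)
    (hqn : q < finrank ℝ E) (hu : ContDiff ℝ 1 u) (hI : ∫⁻ x, ‖fderiv ℝ u x‖ₑ ^ q ∂μ ≠ ∞) :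
    ∃ c, ∫⁻ x, (‖u x - c‖ₑ / ‖x‖ₑ) ^ q ∂μ ≤
      ENNReal.ofReal (q / (finrank ℝ E - q)) ^ q * ∫⁻ x, ‖fderiv ℝ u x‖ₑ ^ q ∂μ := by
  obtain ⟨c, hc⟩ := exists_ae_tendsto_ray μ hq hqn hu hI
  refine ⟨c, ?_⟩
  simpa only [one_mul] using lintegral_enorm_sub_div_enorm_rpow_le_of_tendsto μ hq hu (σ := 1)
    abs_one (by linarith) (by simpa only [one_mul] using hc)

end NoncriticalHardy

section OneDimensionalHardy

variable {q : ℝ}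

lemma setLIntegral_Ioo_eq_mul_hardyOperator {t : ℝ} (ht : 0 < t) (g : ℝ → ℝ≥0∞) :
    ∫⁻ τ in Ioo 0 t, g τ = ENNReal.ofReal t * hardyOperator (-1) g t := by
  have hderiv (s : ℝ) : HasDerivAt (fun s => exp (-s) * t) (-exp (-s) * t) s := by
    simpa using (hasDerivAt_neg s).exp.mul_const t
  have hinj : Function.Injective fun s => exp (-s) * t := fun _ _ h => by simpa [ht.ne'] using h
  have himage : (fun s => exp (-s) * t) '' Ioi 0 = Ioo 0 t := by
    ext τ
    constructor
    · rintro ⟨s, hs, rfl⟩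
      exact ⟨by positivity, mul_lt_of_lt_one_left ht (exp_lt_one_iff.2 (neg_neg_of_pos hs))⟩
    · rintro ⟨h₀, hτ⟩
      refine ⟨log (t / τ), log_pos ((one_lt_div h₀).2 hτ), ?_⟩
      simp only [← log_inv, exp_log (inv_pos.2 (div_pos ht h₀))]
      field_simp
  rw [← himage, lintegral_image_eq_lintegral_abs_deriv_mul measurableSet_Ioi
    (fun s _ => (hderiv s).hasDerivWithinAt) hinj.injOn, hardyOperator,
    ← lintegral_const_mul' _ _ ENNReal.ofReal_ne_top]
  simp only [neg_mul, one_mul, abs_neg, abs_of_pos (mul_pos (exp_pos _) ht),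
    ENNReal.ofReal_mul (exp_pos _).le, smul_eq_mul, mul_assoc, mul_left_comm]

theorem setLIntegral_Ioi_setLIntegral_Ioo_div_rpow_le (hq : 1 < q) {g : ℝ → ℝ≥0∞}
    (hg : Measurable g) :
    ∫⁻ t in Ioi (0 : ℝ), ((∫⁻ τ in Ioo 0 t, g τ) / ENNReal.ofReal t) ^ q ≤
      ENNReal.ofReal (q / (q - 1)) ^ q * ∫⁻ t in Ioi (0 : ℝ), g t ^ q := by
  have hq₀ : 0 < q := by linarith
  have hrpow (t : ℝ) : (Ioi 0).indicator g t ^ q = (Ioi 0).indicator (g · ^ q) t := by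
    by_cases ht : t ∈ Ioi 0 <;> simp [ht, hq₀]
  calc ∫⁻ t in Ioi (0 : ℝ), ((∫⁻ τ in Ioo 0 t, g τ) / ENNReal.ofReal t) ^ q
      ≤ ∫⁻ t in Ioi (0 : ℝ), hardyOperator (-1) ((Ioi 0).indicator g) t ^ q := by
        refine setLIntegral_mono' measurableSet_Ioi fun t (ht : 0 < t) => ?_
        gcongr
        refine ENNReal.div_le_of_le_mul' (le_of_eq ?_)
        rw [← setLIntegral_Ioo_eq_mul_hardyOperator ht,
          setLIntegral_indicator measurableSet_Ioi, inter_eq_right.2 Ioo_subset_Ioi_self]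
    _ ≤ ∫⁻ t, hardyOperator (-1) ((Ioi 0).indicator g) t ^ q := setLIntegral_le_lintegral _ _
    _ ≤ ENNReal.ofReal (q / (-1 * (finrank ℝ ℝ - q))) ^ q * ∫⁻ t, (Ioi 0).indicator g t ^ q :=
        lintegral_hardyOperator_rpow_le volume hq.le (by simpa using hq)
          (hg.indicator measurableSet_Ioi)
    _ = ENNReal.ofReal (q / (q - 1)) ^ q * ∫⁻ t in Ioi (0 : ℝ), g t ^ q := by
        simp only [hrpow, lintegral_indicator measurableSet_Ioi, finrank_self, Nat.cast_one,
          neg_one_mul, neg_sub]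

lemma setLIntegral_exp_mul_div_exp_mul_rpow_le (hq : 1 < q) {a : ℝ} (ha : 0 ≤ a) {f g : ℝ → ℝ≥0∞}
    (hg : Measurable g)
    (hfg : ∀ t > a, f t ≤ ∫⁻ τ in Ioo 0 t, ENNReal.ofReal (exp τ) * g τ) :
    ∫⁻ t in Ioi a, ENNReal.ofReal (exp (t * q)) * (f t / ENNReal.ofReal (exp t * t)) ^ q ≤
      ENNReal.ofReal (q / (q - 1)) ^ q * ∫⁻ t, ENNReal.ofReal (exp (t * q)) * g t ^ q := by
  have hq₀ : 0 < q := by linarith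
  have hexp (t : ℝ) (y : ℝ≥0∞) :
      ENNReal.ofReal (exp (t * q)) * y ^ q = (ENNReal.ofReal (exp t) * y) ^ q := by
    rw [ENNReal.mul_rpow_of_nonneg _ _ hq₀.le, ENNReal.ofReal_rpow_of_pos (exp_pos t), exp_mul]
  simp only [hexp]
  calc ∫⁻ t in Ioi a, (ENNReal.ofReal (exp t) * (f t / ENNReal.ofReal (exp t * t))) ^ q
      ≤ ∫⁻ t in Ioi a,
          ((∫⁻ τ in Ioo 0 t, ENNReal.ofReal (exp τ) * g τ) / ENNReal.ofReal t) ^ q := by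
        refine setLIntegral_mono' measurableSet_Ioi fun t ht => ?_
        rw [ENNReal.ofReal_mul (exp_pos t).le, ← mul_div_assoc,
          ENNReal.mul_div_mul_left _ _ (by simpa using exp_pos t) ENNReal.ofReal_ne_top]
        gcongr
        exact hfg t ht
    _ ≤ ∫⁻ t in Ioi (0 : ℝ),
          ((∫⁻ τ in Ioo 0 t, ENNReal.ofReal (exp τ) * g τ) / ENNReal.ofReal t) ^ q :=
        lintegral_mono_set (Ioi_subset_Ioi ha)
    _ ≤ ENNReal.ofReal (q / (q - 1)) ^ q *
          ∫⁻ t in Ioi (0 : ℝ), (ENNReal.ofReal (exp t) * g t) ^ q :=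
        setLIntegral_Ioi_setLIntegral_Ioo_div_rpow_le hq (by fun_prop)
    _ ≤ ENNReal.ofReal (q / (q - 1)) ^ q * ∫⁻ t, (ENNReal.ofReal (exp t) * g t) ^ q := by
        gcongr
        exact Measure.restrict_le_self

end OneDimensionalHardy

section LogarithmicHardy

lemma lintegral_volumeIoiPow_eq_lintegral_exp (k : ℕ) {f : ℝ → ℝ≥0∞} (hf : Measurable f) :
    ∫⁻ r : Ioi (0 : ℝ), f r ∂.volumeIoiPow k =
      ∫⁻ t, ENNReal.ofReal (exp (t * (k + 1 : ℕ))) * f (exp t) := by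
  calc ∫⁻ r : Ioi (0 : ℝ), f r ∂.volumeIoiPow k
      = ∫⁻ r : Ioi (0 : ℝ), ENNReal.ofReal (r.1 ^ k) * f r ∂.comap Subtype.val volume :=
        lintegral_withDensity_eq_lintegral_mul _ (by fun_prop) (hf.comp measurable_subtype_coe)
    _ = ∫⁻ r in exp '' univ, ENNReal.ofReal (r ^ k) * f r := by
        rw [lintegral_subtype_comap measurableSet_Ioi fun r => ENNReal.ofReal (r ^ k) * f r,
          image_univ, range_exp]
    _ = ∫⁻ t, ENNReal.ofReal (exp t) * (ENNReal.ofReal (exp t ^ k) * f (exp t)) := by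
        rw [lintegral_image_eq_lintegral_abs_deriv_mul .univ
          (fun t _ => (hasDerivAt_exp t).hasDerivWithinAt) exp_injective.injOn]
        simp
    _ = ∫⁻ t, ENNReal.ofReal (exp (t * (k + 1 : ℕ))) * f (exp t) := by
        simp only [← mul_assoc, ← ENNReal.ofReal_mul (exp_pos _).le, ← pow_succ']
        simp only [← exp_nat_mul, mul_comm]

variable {E : Type*} [NormedAddCommGroup E] [NormedSpace ℝ E] [MeasurableSpace E] [BorelSpace E]
  [FiniteDimensional ℝ E] [Nontrivial E] (μ : Measure E) [μ.IsAddHaarMeasure] {q : ℝ}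

theorem lintegral_eq_lintegral_toSphere_lintegral_exp {f : E → ℝ≥0∞} (hf : Measurable f) :
    ∫⁻ x, f x ∂μ = ∫⁻ θ : sphere (0 : E) 1,
      (∫⁻ t : ℝ, ENNReal.ofReal (exp (t * finrank ℝ E)) * f (exp t • (θ : E))) ∂μ.toSphere := by
  have hpolar : Measurable fun p : sphere (0 : E) 1 × Ioi (0 : ℝ) => f ((p.2 : ℝ) • (p.1 : E)) :=
    by fun_prop
  calc ∫⁻ x, f x ∂μ
      = ∫⁻ x : ({0}ᶜ : Set E), f x ∂μ.comap (↑) := by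
        rw [lintegral_subtype_comap (measurableSet_singleton _).compl f, restrict_compl_singleton]
    _ = ∫⁻ p : sphere (0 : E) 1 × Ioi (0 : ℝ), f ((p.2 : ℝ) • (p.1 : E))
          ∂μ.toSphere.prod (.volumeIoiPow (finrank ℝ E - 1)) := by
        rw [← μ.measurePreserving_homeomorphUnitSphereProd.lintegral_comp_emb
          (Homeomorph.measurableEmbedding _)]
        congr with x
        simp [smul_smul, mul_inv_cancel₀ (norm_ne_zero_iff.2 x.2)]
    _ = ∫⁻ θ : sphere (0 : E) 1,
          (∫⁻ t : ℝ, ENNReal.ofReal (exp (t * finrank ℝ E)) * f (exp t • (θ : E))) ∂μ.toSphere := by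
        rw [lintegral_prod _ hpolar.aemeasurable]
        refine lintegral_congr fun θ => ?_
        rw [lintegral_volumeIoiPow_eq_lintegral_exp _ (f := fun r => f (r • (θ : E)))
          (by fun_prop), Nat.sub_add_cancel finrank_pos]

theorem lintegral_compl_closedBall_div_norm_mul_log_rpow_le (hq : 1 < q) (hqn : q = finrank ℝ E)
    {a : ℝ} (ha : 0 ≤ a) {f g : E → ℝ≥0∞} (hf : Measurable f) (hg : Measurable g)
    (hfg : ∀ θ : E, ‖θ‖ = 1 → ∀ t > a,
      f (exp t • θ) ≤ ∫⁻ τ in Ioo 0 t, ENNReal.ofReal (exp τ) * g (exp τ • θ)) :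
    ∫⁻ x in (closedBall 0 (exp a))ᶜ, (f x / ENNReal.ofReal (‖x‖ * log ‖x‖)) ^ q ∂μ ≤
      ENNReal.ofReal (q / (q - 1)) ^ q * ∫⁻ x, g x ^ q ∂μ := by
  have hV : MeasurableSet (closedBall (0 : E) (exp a))ᶜ := measurableSet_closedBall.compl
  rw [← lintegral_indicator hV, lintegral_eq_lintegral_toSphere_lintegral_exp μ (by measurability),
    lintegral_eq_lintegral_toSphere_lintegral_exp μ (hg.pow_const q), ← hqn,
    ← lintegral_const_mul' _ _ (by finiteness)]
  refine lintegral_mono fun θ => ?_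
  have hθ : ‖(θ : E)‖ = 1 := by simp
  have hnorm (t : ℝ) : ‖exp t • (θ : E)‖ = exp t := by simp [norm_smul]
  refine le_trans (le_of_eq ?_) (setLIntegral_exp_mul_div_exp_mul_rpow_le hq ha
    (hg.comp (by fun_prop : Measurable fun t => exp t • (θ : E))) (hfg θ hθ))
  rw [← lintegral_indicator measurableSet_Ioi]
  congr with t
  by_cases ht : a < t <;> simp [indicator, hnorm, ht]

end LogarithmicHardy

section CriticalHardy

variable {E F : Type*} [NormedAddCommGroup E] [NormedSpace ℝ E] [NormedAddCommGroup F]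
  [NormedSpace ℝ F] {q : ℝ} {u : E → F}

lemma enorm_sub_le_lintegral_ray_add_lintegral (hu : ContDiff ℝ 1 u) (c : F) (x : E) {t : ℝ}
    (ht : 1 ≤ t) :
    ‖u (exp t • x) - c‖ₑ ≤
      ‖x‖ₑ * (∫⁻ τ in Ioo 0 t, ENNReal.ofReal (exp τ) * ‖fderiv ℝ u (exp τ • x)‖ₑ) +
        ∫⁻ τ in Ioo (0 : ℝ) 1, ‖u (exp τ • x) - c‖ₑ := by
  let D : ℝ≥0∞ := ‖x‖ₑ * ∫⁻ τ in Ioo 0 t, ENNReal.ofReal (exp τ) * ‖fderiv ℝ u (exp τ • x)‖ₑ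
  have hstart : ∀ a ∈ Ioo (0 : ℝ) 1, ‖u (exp t • x) - c‖ₑ ≤ D + ‖u (exp a • x) - c‖ₑ := by
    intro a ha
    have hray : ‖u (exp t • x) - u (exp a • x)‖ₑ ≤ D := by
      have h := enorm_sub_le_lintegral_ray hu abs_one x (ha.2.le.trans ht)
      simp only [one_mul, ← restrict_Ioo_eq_restrict_Icc] at h
      exact h.trans (mul_le_mul_right (lintegral_mono_set (Ioo_subset_Ioo_left ha.1.le)) _)
    rw [← sub_add_sub_cancel _ (u (exp a • x)) c]
    exact (enorm_add_le _ _).trans (by gcongr)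
  calc ‖u (exp t • x) - c‖ₑ
      = ∫⁻ _ in Ioo (0 : ℝ) 1, ‖u (exp t • x) - c‖ₑ := by simp
    _ ≤ ∫⁻ a in Ioo (0 : ℝ) 1, D + ‖u (exp a • x) - c‖ₑ :=
        setLIntegral_mono' measurableSet_Ioo hstart
    _ = D + ∫⁻ a in Ioo (0 : ℝ) 1, ‖u (exp a • x) - c‖ₑ := by
        rw [lintegral_add_left measurable_const]
        simp

variable [MeasurableSpace E] [BorelSpace E] [FiniteDimensional ℝ E] [Nontrivial E] (μ : Measure E)
  [μ.IsAddHaarMeasure]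

/-- The starting point of the rays is averaged over the shell `1 < ‖x‖ < e`, so that the boundary
term of the one-dimensional Hardy inequality is of the same form as its right-hand side. -/
theorem lintegral_compl_closedBall_enorm_sub_div_norm_mul_log_rpow_le (hq : 1 < q)
    (hqn : q = finrank ℝ E) (hu : ContDiff ℝ 1 u) (c : F) :
    ∫⁻ x in (closedBall 0 (exp 1))ᶜ, (‖u x - c‖ₑ / ENNReal.ofReal (‖x‖ * log ‖x‖)) ^ q ∂μ ≤
      ENNReal.ofReal (q / (q - 1)) ^ q * (2 ^ (q - 1) * (∫⁻ x, ‖fderiv ℝ u x‖ₑ ^ q ∂μ +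
        ∫⁻ x in closedBall 0 (exp 1), ‖u x - c‖ₑ ^ q ∂μ)) := by
  have hq₀ : 0 < q := by linarith
  let b : E → ℝ≥0∞ := (closedBall 0 (exp 1)).indicator (‖u · - c‖ₑ)
  have huc : Measurable (‖u · - c‖ₑ) := (hu.continuous.sub continuous_const).enorm.measurable
  have hDu : Measurable (‖fderiv ℝ u ·‖ₑ) := (hu.continuous_fderiv one_ne_zero).enorm.measurable
  have hb : Measurable b := huc.indicator measurableSet_closedBall
  have hbq (x : E) : b x ^ q = (closedBall 0 (exp 1)).indicator (‖u · - c‖ₑ ^ q) x := by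
    by_cases hx : x ∈ closedBall 0 (exp 1) <;> simp only [b, indicator, hx, if_true, if_false,
      ENNReal.zero_rpow_of_pos hq₀]
  have hray (θ : E) (hθ : ‖θ‖ = 1) (t : ℝ) (ht : t > 1) : ‖u (exp t • θ) - c‖ₑ ≤
      ∫⁻ τ in Ioo 0 t, ENNReal.ofReal (exp τ) * (‖fderiv ℝ u (exp τ • θ)‖ₑ + b (exp τ • θ)) := by
    have hshell : ∫⁻ τ in Ioo (0 : ℝ) 1, ‖u (exp τ • θ) - c‖ₑ ≤
        ∫⁻ τ in Ioo (0 : ℝ) t, ENNReal.ofReal (exp τ) * b (exp τ • θ) := by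
      refine (setLIntegral_mono' measurableSet_Ioo fun τ hτ => ?_).trans
        (lintegral_mono_set (Ioo_subset_Ioo_right ht.le))
      have hmem : exp τ • θ ∈ closedBall (0 : E) (exp 1) := by
        simpa [norm_smul, hθ] using hτ.2.le
      simp only [b, indicator_of_mem hmem]
      exact le_mul_of_one_le_left' (ENNReal.one_le_ofReal.2 (one_le_exp hτ.1.le))
    refine (enorm_sub_le_lintegral_ray_add_lintegral hu c θ ht.le).trans ?_
    simp only [mul_add]
    rw [lintegral_add_left (by fun_prop), ← ofReal_norm, hθ, ENNReal.ofReal_one, one_mul]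
    gcongr
  refine (lintegral_compl_closedBall_div_norm_mul_log_rpow_le μ hq hqn zero_le_one huc
    (hDu.add hb) hray).trans ?_
  gcongr
  rw [← lintegral_indicator measurableSet_closedBall,
    ← lintegral_add_left (hDu.pow_const q), ← lintegral_const_mul' _ _ (by finiteness)]
  gcongr with x
  rw [← hbq]
  exact ENNReal.rpow_add_le_mul_rpow_add_rpow _ _ hq.le

end CriticalHardy

section HardyWeight

variable {E F : Type*} [NormedAddCommGroup E] [NormedSpace ℝ E] {q : ℝ}

/-- The weight `d_q` of the Hardy inequality, with a logarithmic correction in the critical case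
where the exponent `q` equals the dimension. -/
noncomputable def hardyWeight (q : ℝ) (x : E) : ℝ :=
  if q = finrank ℝ E then √(1 + ‖x‖ ^ 2) * log √(2 + ‖x‖ ^ 2) else √(1 + ‖x‖ ^ 2)

lemma norm_le_hardyWeight (hq : q ≠ finrank ℝ E) (x : E) : ‖x‖ ≤ hardyWeight q x := by
  rw [hardyWeight, if_neg hq]
  exact le_sqrt_of_sq_le (by linarith)

lemma log_sqrt_two_le_hardyWeight (hq : q = finrank ℝ E) (x : E) : log √2 ≤ hardyWeight q x := by
  rw [hardyWeight, if_pos hq]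
  have hlog : log √2 ≤ log √(2 + ‖x‖ ^ 2) := by
    gcongr
    linarith [sq_nonneg ‖x‖]
  have hlog₀ : 0 ≤ log √2 := log_nonneg (one_le_sqrt.2 one_le_two)
  exact hlog.trans (le_mul_of_one_le_left (hlog₀.trans hlog)
    (one_le_sqrt.2 (by linarith [sq_nonneg ‖x‖])))

lemma norm_mul_log_norm_le_hardyWeight (hq : q = finrank ℝ E) {x : E} (hx : 1 ≤ ‖x‖) :
    ‖x‖ * log ‖x‖ ≤ hardyWeight q x := by
  rw [hardyWeight, if_pos hq]
  have := log_nonneg hx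
  gcongr <;> exact le_sqrt_of_sq_le (by linarith)

lemma log_sqrt_two_pos : 0 < log √2 := log_pos (by rw [lt_sqrt] <;> norm_num)

lemma hardyWeight_pos (q : ℝ) (x : E) : 0 < hardyWeight q x := by
  by_cases hq : q = finrank ℝ E
  · exact log_sqrt_two_pos.trans_le (log_sqrt_two_le_hardyWeight hq x)
  · rw [hardyWeight, if_neg hq]
    positivity

variable [MeasurableSpace E] (μ : Measure E)

lemma lintegral_div_hardyWeight_rpow_le_of_ne_finrank (hq : 0 ≤ q) (hqn : q ≠ finrank ℝ E)
    (f : E → ℝ≥0∞) :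
    ∫⁻ x, (f x / ENNReal.ofReal (hardyWeight q x)) ^ q ∂μ ≤ ∫⁻ x, (f x / ‖x‖ₑ) ^ q ∂μ := by
  gcongr with x
  rw [← ofReal_norm]
  exact ENNReal.ofReal_le_ofReal (norm_le_hardyWeight hqn x)

variable [BorelSpace E]

lemma lintegral_div_hardyWeight_rpow_le_of_eq_finrank (hq : 0 ≤ q) (hqn : q = finrank ℝ E)
    (f : E → ℝ≥0∞) :
    ∫⁻ x, (f x / ENNReal.ofReal (hardyWeight q x)) ^ q ∂μ ≤
      (ENNReal.ofReal (log √2) ^ q)⁻¹ * ∫⁻ x in closedBall 0 (exp 1), f x ^ q ∂μ +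
        ∫⁻ x in (closedBall 0 (exp 1))ᶜ, (f x / ENNReal.ofReal (‖x‖ * log ‖x‖)) ^ q ∂μ := by
  have hlog : ENNReal.ofReal (log √2) ≠ 0 := by simpa using log_sqrt_two_pos
  rw [← lintegral_add_compl _ (measurableSet_closedBall (x := (0 : E)) (ε := exp 1)),
    ← lintegral_const_mul' _ _ (by finiteness)]
  refine add_le_add (lintegral_mono fun x => ?_)
    (setLIntegral_mono' measurableSet_closedBall.compl fun x hx => ?_)
  · rw [ENNReal.div_rpow_of_nonneg _ _ hq, div_eq_mul_inv, mul_comm]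
    gcongr
    exact log_sqrt_two_le_hardyWeight hqn x
  · gcongr
    rw [mem_compl_iff, mem_closedBall_zero_iff, not_le] at hx
    exact norm_mul_log_norm_le_hardyWeight hqn ((one_le_exp zero_le_one).trans hx.le)

variable [FiniteDimensional ℝ E] [μ.IsAddHaarMeasure] [NormedAddCommGroup F] [NormedSpace ℝ F]

theorem exists_lintegral_enorm_sub_div_hardyWeight_rpow_le_of_eq_finrank (hq : 1 < q)
    (hqn : q = finrank ℝ E) :
    ∃ K ≠ ∞, ∀ u : E → F, ContDiff ℝ 1 u → ∃ c,
      ∫⁻ x, (‖u x - c‖ₑ / ENNReal.ofReal (hardyWeight q x)) ^ q ∂μ ≤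
        K * ∫⁻ x, ‖fderiv ℝ u x‖ₑ ^ q ∂μ := by
  have : Nontrivial E :=
    nontrivial_of_finrank_pos (R := ℝ) (by exact_mod_cast hqn ▸ one_pos.trans hq)
  have hlog : ENNReal.ofReal (log √2) ≠ 0 := by simpa using log_sqrt_two_pos
  let P : ℝ≥0∞ := 2 ^ finrank ℝ E * ENNReal.ofReal (2 * exp 1) ^ q
  refine ⟨(ENNReal.ofReal (log √2) ^ q)⁻¹ * P +
    ENNReal.ofReal (q / (q - 1)) ^ q * (2 ^ (q - 1) * (1 + P)), by finiteness, fun u hu => ?_⟩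
  obtain ⟨c, hc⟩ := exists_lintegral_closedBall_enorm_sub_rpow_le μ hq.le hu 0 (exp_pos 1)
  refine ⟨c, (lintegral_div_hardyWeight_rpow_le_of_eq_finrank μ (by linarith) hqn _).trans ?_⟩
  rw [add_mul]
  refine add_le_add ?_ ((lintegral_compl_closedBall_enorm_sub_div_norm_mul_log_rpow_le
    μ hq hqn hu c).trans ?_)
  · rw [mul_assoc]
    gcongr
  · rw [mul_assoc, mul_assoc, add_mul, one_mul]
    gcongr

theorem exists_lintegral_enorm_sub_div_hardyWeight_rpow_le [CompleteSpace F] (hq : 1 ≤ q)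
    (hcrit : q = finrank ℝ E → 1 < q) :
    ∃ K ≠ ∞, ∀ u : E → F, ContDiff ℝ 1 u → ∫⁻ x, ‖fderiv ℝ u x‖ₑ ^ q ∂μ ≠ ∞ → ∃ c,
      ∫⁻ x, (‖u x - c‖ₑ / ENNReal.ofReal (hardyWeight q x)) ^ q ∂μ ≤
        K * ∫⁻ x, ‖fderiv ℝ u x‖ₑ ^ q ∂μ := by
  rcases lt_trichotomy q (finrank ℝ E) with hlt | heq | hgt
  · refine ⟨ENNReal.ofReal (q / (finrank ℝ E - q)) ^ q, by finiteness, fun u hu hI => ?_⟩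
    obtain ⟨c, hc⟩ := exists_lintegral_enorm_sub_div_enorm_rpow_le_of_lt_finrank μ hq hlt hu hI
    exact ⟨c, (lintegral_div_hardyWeight_rpow_le_of_ne_finrank μ (by linarith) hlt.ne _).trans hc⟩
  · obtain ⟨K, hK, hu⟩ :=
      exists_lintegral_enorm_sub_div_hardyWeight_rpow_le_of_eq_finrank (F := F) μ (hcrit heq) heq
    exact ⟨K, hK, fun u hu₁ _ => hu u hu₁⟩
  · refine ⟨ENNReal.ofReal (q / (q - finrank ℝ E)) ^ q, by finiteness, fun u hu _ => ⟨u 0, ?_⟩⟩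
    exact (lintegral_div_hardyWeight_rpow_le_of_ne_finrank μ (by linarith) hgt.ne' _).trans
      (lintegral_enorm_sub_div_enorm_rpow_le_of_finrank_lt μ hq hgt hu)

theorem stmt_7_general [CompleteSpace F] (hq : 1 ≤ q) (hcrit : q = finrank ℝ E → 1 < q) :
    ∃ C : ℝ, 0 < C ∧ ∀ u : E → F, ContDiff ℝ 1 u → Integrable (fun x => ‖fderiv ℝ u x‖ ^ q) μ →
      ∃ c, ∫⁻ x, ENNReal.ofReal (‖u x - c‖ ^ q / hardyWeight q x ^ q) ∂μ ≤
        ENNReal.ofReal (C ^ q * ∫ x, ‖fderiv ℝ u x‖ ^ q ∂μ) := by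
  have hq₀ : 0 < q := by linarith
  obtain ⟨K, hK, hHardy⟩ :=
    exists_lintegral_enorm_sub_div_hardyWeight_rpow_le (F := F) μ hq hcrit
  refine ⟨(K.toReal + 1) ^ q⁻¹, by positivity, fun u hu hI => ?_⟩
  have hDu : ∫⁻ x, ‖fderiv ℝ u x‖ₑ ^ q ∂μ = ENNReal.ofReal (∫ x, ‖fderiv ℝ u x‖ ^ q ∂μ) := by
    rw [ofReal_integral_eq_lintegral_ofReal hI (ae_of_all _ fun x => by positivity)]
    simp only [← ENNReal.ofReal_rpow_of_nonneg (norm_nonneg _) hq₀.le, ofReal_norm]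
  obtain ⟨c, hc⟩ := hHardy u hu (hDu ▸ ENNReal.ofReal_ne_top)
  have hweight (x : E) : ENNReal.ofReal (‖u x - c‖ ^ q / hardyWeight q x ^ q) =
      (‖u x - c‖ₑ / ENNReal.ofReal (hardyWeight q x)) ^ q := by
    rw [← div_rpow (norm_nonneg _) (hardyWeight_pos q x).le, ← ofReal_norm,
      ← ENNReal.ofReal_div_of_pos (hardyWeight_pos q x), ENNReal.ofReal_rpow_of_nonneg
        (div_nonneg (norm_nonneg _) (hardyWeight_pos q x).le) hq₀.le]
  refine ⟨c, ?_⟩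
  simp only [hweight]
  refine hc.trans ?_
  rw [hDu, rpow_inv_rpow (by positivity) hq₀.ne', ENNReal.ofReal_mul (by positivity)]
  gcongr
  exact (ENNReal.ofReal_toReal hK).symm.trans_le (ENNReal.ofReal_le_ofReal (by linarith))

end HardyWeight

/-- Lemma 3.9 (weighted Hardy-type inequality): with
`d_q(x) = (1+|x|²)^{1/2}` for `q ≠ N` and `d_q(x) = (1+|x|²)^{1/2} log (2+|x|²)^{1/2}`
for `q = N`, every `C¹` function `u` with `∇u ∈ L^q(ℝ^N)` admits a constant `c` with
`∫ |u - c|^q / d_q^q ≤ C^q ∫ ‖∇u‖^q`. -/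
theorem stmt_7 (N : ℕ) (hN : 1 ≤ N) (q : ℝ) (hq : 1 < q) :
    ∃ C : ℝ, 0 < C ∧ ∀ u : EuclideanSpace ℝ (Fin N) → ℂ, ContDiff ℝ 1 u →
      Integrable (fun x => ‖fderiv ℝ u x‖ ^ q) →
      ∃ c : ℂ,
        (∫⁻ x : EuclideanSpace ℝ (Fin N),
            ENNReal.ofReal (‖u x - c‖ ^ q /
              ((if q = (N : ℝ) then
                  Real.sqrt (1 + ‖x‖ ^ 2) * Real.log (Real.sqrt (2 + ‖x‖ ^ 2))
                else Real.sqrt (1 + ‖x‖ ^ 2)) ^ q))) ≤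
          ENNReal.ofReal (C ^ q * ∫ x : EuclideanSpace ℝ (Fin N), ‖fderiv ℝ u x‖ ^ q) := by
  simpa only [hardyWeight, finrank_euclideanSpace_fin] using
    stmt_7_general (E := EuclideanSpace ℝ (Fin N)) (F := ℂ) volume hq.le fun _ => hq
end
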